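/- (Theorem: Initialization II.) Let Y_{(0)} = XA + Z_{(0)} with Z_{(0)} having i.i.d. N(0, (2σ)²) entries and A ∈ Θ(s,r,d,γ). Let A_{(0)} = argmin_{A' ∈ ℝ^{p×m}} ‖Y_{(0)} − XA'‖_F²/2 + λ_0 ‖A'‖_{2,1} with λ_0 = 4σ max_j ‖X_{*j}‖ (√m + √(4 log p)), r̂ = max{j : σ_j(XA_{(0)}) ≥ ση}, and let V_{(0)} be the matrix of top-r̂ right singular vectors of XA_{(0)}, where η ≥ 2C_0 √(s(m + 4 log p))/ξ for a sufficiently large constant C_0 depending on κ_±(s_*) and c_* and an absolute constant ξ ∈ (0,1]. Suppose Condition SE(s_*, c_*, K) holds with an absolute constant K > 1, s_* ≥ 2s and 6c_* ≤ √(s_*/s − 1), that σ√(s(m + 4 log p)) < c_1 d for a sufficiently small constant c_1 > 0, and that δ_r = σ_r(XA) ≥ (1+ξ)ση. Then with probability at least 1 − 1/p, r̂ = r and σ_r(V'V_{(0)}) > c_0, where V ∈ O(m,r) is the right singular vector matrix of XA and c_0 > 0 depends only on c_1, C_0, κ_±(s_*) and c_*. -/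

import Mathlib

open MeasureTheory ProbabilityTheory Matrix Set
open scoped ENNReal NNReal

noncomputable section

/-- Euclidean (ℓ₂) norm of a finitely indexed real vector. -/
def l2norm {I : Type*} [Fintype I] (v : I → ℝ) : ℝ := Real.sqrt (∑ i, v i ^ 2)

/-- Frobenius norm of a real matrix. -/
def frobNorm {I J : Type*} [Fintype I] [Fintype J] (M : Matrix I J ℝ) : ℝ :=
  Real.sqrt (∑ i, ∑ j, M i j ^ 2)

/-- ℓ₂/ℓ₁ norm: the sum of the ℓ₂ norms of the rows. -/
def norm21 {I J : Type*} [Fintype I] [Fintype J] (M : Matrix I J ℝ) : ℝ :=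
  ∑ i, l2norm (M i)

open Classical in
/-- Row support: indices of nonzero rows. -/
def rowSupport {I J : Type*} [Fintype I] [Fintype J] (M : Matrix I J ℝ) : Finset I :=
  Finset.univ.filter (fun i => M i ≠ 0)

/-- The j-th largest singular value (j ≥ 1), via the Courant–Fischer max–min
characterization: `σ_j(M) = max_{dim V = j} min_{v ∈ V, ‖v‖=1} ‖Mv‖`. -/
def singularValue {I J : Type*} [Fintype I] [Fintype J] (M : Matrix I J ℝ) (j : ℕ) : ℝ :=
  sSup { t | ∃ V : Submodule ℝ (J → ℝ), Module.finrank ℝ V = j ∧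
    t = sInf { u | ∃ v ∈ V, l2norm v = 1 ∧ u = l2norm (M.mulVec v) } }

/-- Operator norm (largest singular value). -/
def opNorm {I J : Type*} [Fintype I] [Fintype J] (M : Matrix I J ℝ) : ℝ :=
  sSup { t | ∃ v : J → ℝ, l2norm v = 1 ∧ t = l2norm (M.mulVec v) }

/-- Schatten-q norm. -/
def schattenNorm {I J : Type*} [Fintype I] [Fintype J] (M : Matrix I J ℝ) (q : ℝ) : ℝ :=
  (∑ i ∈ Finset.Icc 1 (min (Fintype.card I) (Fintype.card J)), singularValue M i ^ q) ^ (1 / q)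

/-- Squared lower k-sparse Riesz constant `κ₋²(k)`:
the minimum over column subsets B with |B| = k of the smallest eigenvalue of X_B' X_B. -/
def kappaMinusSq {n p : ℕ} (X : Matrix (Fin n) (Fin p) ℝ) (k : ℕ) : ℝ :=
  sInf { t | ∃ B : Finset (Fin p), B.card = k ∧ ∃ v : Fin p → ℝ,
    (∀ i, i ∉ B → v i = 0) ∧ l2norm v = 1 ∧ t = l2norm (X.mulVec v) ^ 2 }

/-- Squared upper k-sparse Riesz constant `κ₊²(k)`. -/
def kappaPlusSq {n p : ℕ} (X : Matrix (Fin n) (Fin p) ℝ) (k : ℕ) : ℝ :=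
  sSup { t | ∃ B : Finset (Fin p), B.card = k ∧ ∃ v : Fin p → ℝ,
    (∀ i, i ∉ B → v i = 0) ∧ l2norm v = 1 ∧ t = l2norm (X.mulVec v) ^ 2 }

def kappaMinus {n p : ℕ} (X : Matrix (Fin n) (Fin p) ℝ) (k : ℕ) : ℝ :=
  Real.sqrt (kappaMinusSq X k)

def kappaPlus {n p : ℕ} (X : Matrix (Fin n) (Fin p) ℝ) (k : ℕ) : ℝ :=
  Real.sqrt (kappaPlusSq X k)

/-- Membership in the parameter space Θ(s, r, d, γ): rank r, all nonzero singular values in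
(d, γd], and at most s nonzero rows. (Singular values are automatically nonincreasing.) -/
def memTheta {p m : ℕ} (A : Matrix (Fin p) (Fin m) ℝ) (s r : ℕ) (d γ : ℝ) : Prop :=
  A.rank = r ∧ 0 < d ∧ singularValue A 1 ≤ γ * d ∧ d < singularValue A r ∧
    (rowSupport A).card ≤ s

/-- `V` is a matrix of top-r right singular vectors of `M`: the columns of `V` are orthonormal
eigenvectors of `MᵀM`, the j-th column with eigenvalue `σ_j(M)²`. -/
def IsRightSingularVectors {I J : Type*} [Fintype I] [Fintype J] {r : ℕ}
    (M : Matrix I J ℝ) (V : Matrix J (Fin r) ℝ) : Prop :=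
  Vᵀ * V = 1 ∧ ∀ j : Fin r,
    (Mᵀ * M).mulVec (fun i => V i j) = (singularValue M (j.1 + 1)) ^ 2 • (fun i => V i j)

/-- `U` is a matrix of top-r left singular vectors of `M`. -/
def IsLeftSingularVectors {I J : Type*} [Fintype I] [Fintype J] {r : ℕ}
    (M : Matrix I J ℝ) (U : Matrix I (Fin r) ℝ) : Prop :=
  IsRightSingularVectors Mᵀ U

instance matrixMeasurableSpace {n m : ℕ} : MeasurableSpace (Matrix (Fin n) (Fin m) ℝ) :=
  (inferInstance : MeasurableSpace (Fin n → Fin m → ℝ))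

/-- Law of an n×m random matrix with i.i.d. N(0, v) entries. -/
def gaussianMatrix (n m : ℕ) (v : ℝ≥0) : Measure (Matrix (Fin n) (Fin m) ℝ) :=
  Measure.pi fun _ : Fin n => Measure.pi fun _ : Fin m => gaussianReal 0 v

open Classical in
/-- Kullback–Leibler divergence D(P‖Q). -/
def klDivM {Ω : Type*} [MeasurableSpace Ω] (P Q : Measure Ω) : ℝ≥0∞ :=
  if P ≪ Q ∧ Integrable (fun x => Real.log (P.rnDeriv Q x).toReal) P
  then ENNReal.ofReal (∫ x, Real.log (P.rnDeriv Q x).toReal ∂P)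
  else ∞

/-- ε-packing number of T with respect to the distance ρ: the maximal cardinality of a subset
of T whose pairwise ρ-distances are all at least ε. -/
def packingNumber {α : Type*} (T : Set α) (ρ : α → α → ℝ) (ε : ℝ) : ℕ :=
  sSup { k | ∃ S : Finset α, ↑S ⊆ T ∧ (∀ x ∈ S, ∀ y ∈ S, x ≠ y → ε ≤ ρ x y) ∧ S.card = k }

/-- Moore–Penrose pseudoinverse (characterized by the four Penrose equations). -/
def IsMoorePenrose {k : ℕ} (M Mi : Matrix (Fin k) (Fin k) ℝ) : Prop :=
  M * Mi * M = M ∧ Mi * M * Mi = Mi ∧ (M * Mi)ᵀ = M * Mi ∧ (Mi * M)ᵀ = Mi * M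

/-!
With probability at least `1 - 1/p` every row of `Xᵀ Z` has norm at most `λ₀ / 2`, by a Chernoff
bound for each column of `X` and a union bound. On that event, comparing the group Lasso objective
at `A₀` and at `A` puts `D = A₀ - A` in the cone where the rows off the support of `A` weigh at most
three times those on it. The sparse Riesz condition makes `X` nearly orthogonal between disjoint
sparse blocks, so peeling `D` into blocks of decreasing row norms bounds `X` from below on the cone,
and `‖X D‖_F` is at most `48 (κ₊² / κ₋²) σ √(s (m + 4 log p)) ≤ ξ σ η / 2`. Weyl's inequality then
separates the `r`-th and `(r + 1)`-st singular values of `X A₀` by the threshold `σ η`. Finally, a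
unit vector `V₀ x` is the image under `(X A₀)ᵀ` of a vector of norm at most `1 / σ_r(X A₀)`, whereas
its component orthogonal to `V` is annihilated by `X A`; hence that component has norm at most
`‖X D‖_F / σ_r(X A₀) < 1 / 2`.
-/

section EuclideanNorm

variable {I : Type*} [Fintype I]

lemma l2norm_eq_norm_toLp (v : I → ℝ) : l2norm v = ‖WithLp.toLp 2 v‖ := by
  simp [l2norm, EuclideanSpace.norm_eq]

lemma l2norm_nonneg (v : I → ℝ) : 0 ≤ l2norm v := Real.sqrt_nonneg _

lemma l2norm_sq (v : I → ℝ) : l2norm v ^ 2 = ∑ i, v i ^ 2 :=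
  Real.sq_sqrt (Finset.sum_nonneg fun _ _ => sq_nonneg _)

lemma l2norm_sq_eq_dotProduct (v : I → ℝ) : l2norm v ^ 2 = v ⬝ᵥ v := by
  simp only [l2norm_sq, dotProduct, ← sq]

@[simp]
lemma l2norm_zero : l2norm (0 : I → ℝ) = 0 := by simp [l2norm]

lemma l2norm_eq_zero {v : I → ℝ} : l2norm v = 0 ↔ v = 0 := by
  simp [l2norm_eq_norm_toLp]

lemma l2norm_smul (c : ℝ) (v : I → ℝ) : l2norm (c • v) = |c| * l2norm v := by
  simp only [l2norm_eq_norm_toLp, WithLp.toLp_smul, norm_smul, Real.norm_eq_abs]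

lemma l2norm_single_one [DecidableEq I] (i : I) : l2norm (Pi.single i 1 : I → ℝ) = 1 := by
  simp [l2norm_eq_norm_toLp]

lemma l2norm_le_l2norm_add_l2norm_sub (v w : I → ℝ) :
    l2norm v ≤ l2norm w + l2norm (v - w) := by
  simpa only [l2norm_eq_norm_toLp, WithLp.toLp_sub] using
    norm_le_norm_add_norm_sub' (WithLp.toLp 2 v) (WithLp.toLp 2 w)

lemma dotProduct_le_l2norm_mul_l2norm (v w : I → ℝ) : v ⬝ᵥ w ≤ l2norm v * l2norm w :=
  Real.sum_mul_le_sqrt_mul_sqrt _ _ _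

end EuclideanNorm

section FrobeniusNorm

variable {I J K : Type*} [Fintype I] [Fintype J] [Fintype K]

lemma frobNorm_nonneg (M : Matrix I J ℝ) : 0 ≤ frobNorm M := Real.sqrt_nonneg _

lemma frobNorm_sq_eq_sum_row (M : Matrix I J ℝ) : frobNorm M ^ 2 = ∑ i, l2norm (M i) ^ 2 := by
  simp only [l2norm_sq]
  exact Real.sq_sqrt (Finset.sum_nonneg fun _ _ => Finset.sum_nonneg fun _ _ => sq_nonneg _)

lemma frobNorm_transpose (M : Matrix I J ℝ) : frobNorm Mᵀ = frobNorm M :=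
  congrArg Real.sqrt Finset.sum_comm

lemma frobNorm_sq_eq_sum_col (M : Matrix I J ℝ) : frobNorm M ^ 2 = ∑ j, l2norm (Mᵀ j) ^ 2 := by
  rw [← frobNorm_transpose, frobNorm_sq_eq_sum_row]

lemma frobNorm_eq_l2norm_vec (M : Matrix I J ℝ) : frobNorm M = l2norm M.vec := by
  simp only [frobNorm, l2norm, Fintype.sum_prod_type_right, vec]

lemma frobNorm_smul (c : ℝ) (M : Matrix I J ℝ) : frobNorm (c • M) = |c| * frobNorm M := by
  simp only [frobNorm_eq_l2norm_vec, vec_smul, l2norm_smul]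

lemma frobNorm_neg (M : Matrix I J ℝ) : frobNorm (-M) = frobNorm M := by
  simpa using frobNorm_smul (-1) M

lemma frobNorm_add_sq (M N : Matrix I J ℝ) :
    frobNorm (M + N) ^ 2 = frobNorm M ^ 2 + 2 * (M.vec ⬝ᵥ N.vec) + frobNorm N ^ 2 := by
  simp only [frobNorm_eq_l2norm_vec, l2norm_sq_eq_dotProduct, vec_add, add_dotProduct,
    dotProduct_add, dotProduct_comm N.vec M.vec]
  ring

lemma vec_dotProduct_le_frobNorm_mul_frobNorm (M N : Matrix I J ℝ) :
    M.vec ⬝ᵥ N.vec ≤ frobNorm M * frobNorm N := by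
  simpa only [frobNorm_eq_l2norm_vec] using dotProduct_le_l2norm_mul_l2norm M.vec N.vec

lemma vec_dotProduct_vec_eq_sum_row (M N : Matrix I J ℝ) :
    M.vec ⬝ᵥ N.vec = ∑ i, M i ⬝ᵥ N i := by
  simp only [dotProduct, Fintype.sum_prod_type_right, vec]

lemma vec_dotProduct_vec_mul (X : Matrix K I ℝ) (Z : Matrix K J ℝ) (D : Matrix I J ℝ) :
    Z.vec ⬝ᵥ (X * D).vec = (Xᵀ * Z).vec ⬝ᵥ D.vec := by
  rw [vec_dotProduct_vec, vec_dotProduct_vec, transpose_mul, transpose_transpose,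
    Matrix.mul_assoc]

lemma l2norm_mulVec_le (M : Matrix I J ℝ) (v : J → ℝ) :
    l2norm (M *ᵥ v) ≤ frobNorm M * l2norm v := by
  refine le_of_sq_le_sq ?_ (mul_nonneg (frobNorm_nonneg _) (l2norm_nonneg _))
  rw [l2norm_sq, mul_pow, frobNorm_sq_eq_sum_row, Finset.sum_mul]
  refine Finset.sum_le_sum fun i _ => ?_
  rw [l2norm_sq, l2norm_sq]
  exact Finset.sum_mul_sq_le_sq_mul_sq _ _ _

end FrobeniusNorm

section SparseRiesz

variable {n p m : ℕ} (X : Matrix (Fin n) (Fin p) ℝ) {k : ℕ} {B C : Finset (Fin p)}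

lemma kappaMinusSq_nonneg (k : ℕ) : 0 ≤ kappaMinusSq X k := by
  refine Real.sInf_nonneg ?_
  rintro t ⟨_, _, _, _, _, rfl⟩
  positivity

lemma kappaPlusSq_nonneg (k : ℕ) : 0 ≤ kappaPlusSq X k := by
  refine Real.sSup_nonneg ?_
  rintro t ⟨_, _, _, _, _, rfl⟩
  positivity

lemma kappaMinus_sq (k : ℕ) : kappaMinus X k ^ 2 = kappaMinusSq X k :=
  Real.sq_sqrt (kappaMinusSq_nonneg X k)

lemma kappaPlus_sq (k : ℕ) : kappaPlus X k ^ 2 = kappaPlusSq X k :=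
  Real.sq_sqrt (kappaPlusSq_nonneg X k)

lemma kappaMinusSq_eq_zero_of_lt (hk : p < k) : kappaMinusSq X k = 0 := by
  refine (congrArg sInf (eq_empty_of_forall_notMem ?_)).trans Real.sInf_empty
  rintro t ⟨B, hB, -⟩
  exact absurd (card_finset_fin_le B) (by omega)

lemma le_of_kappaMinusSq_pos (h : 0 < kappaMinusSq X k) : k ≤ p :=
  not_lt.1 fun hk => h.ne' (kappaMinusSq_eq_zero_of_lt X hk)

lemma kappaMinusSq_le_of_card_eq (hB : B.card = k) {v : Fin p → ℝ} (hv : ∀ i ∉ B, v i = 0)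
    (hv1 : l2norm v = 1) : kappaMinusSq X k ≤ l2norm (X *ᵥ v) ^ 2 := by
  refine csInf_le ⟨0, ?_⟩ ⟨B, hB, v, hv, hv1, rfl⟩
  rintro t ⟨_, _, _, _, _, rfl⟩
  positivity

lemma le_kappaPlusSq_of_card_eq (hB : B.card = k) {v : Fin p → ℝ} (hv : ∀ i ∉ B, v i = 0)
    (hv1 : l2norm v = 1) : l2norm (X *ᵥ v) ^ 2 ≤ kappaPlusSq X k := by
  refine le_csSup ⟨frobNorm X ^ 2, ?_⟩ ⟨B, hB, v, hv, hv1, rfl⟩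
  rintro t ⟨_, _, w, _, hw, rfl⟩
  have hXw : l2norm (X *ᵥ w) ≤ frobNorm X := by simpa [hw] using l2norm_mulVec_le X w
  exact pow_le_pow_left₀ (l2norm_nonneg _) hXw 2

lemma exists_sparse_unit_smul (hk : k ≤ p) (hB : B.card ≤ k) {v : Fin p → ℝ}
    (hv : ∀ i ∉ B, v i = 0) (hv0 : v ≠ 0) :
    ∃ B' : Finset (Fin p), B'.card = k ∧ ∃ w : Fin p → ℝ,
      (∀ i ∉ B', w i = 0) ∧ l2norm w = 1 ∧ v = l2norm v • w := by
  have hnorm : l2norm v ≠ 0 := fun h => hv0 (l2norm_eq_zero.1 h)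
  obtain ⟨B', hBB', hB'⟩ := Finset.exists_superset_card_eq hB (by simpa using hk)
  refine ⟨B', hB', (l2norm v)⁻¹ • v, fun i hi => ?_, ?_, (smul_inv_smul₀ hnorm v).symm⟩
  · simp [hv i fun h => hi (hBB' h)]
  · rw [l2norm_smul, abs_of_nonneg (inv_nonneg.2 (l2norm_nonneg _)), inv_mul_cancel₀ hnorm]

lemma l2norm_mulVec_smul_sq (c : ℝ) (w : Fin p → ℝ) :
    l2norm (X *ᵥ (c • w)) ^ 2 = l2norm (X *ᵥ w) ^ 2 * c ^ 2 := by
  rw [mulVec_smul, l2norm_smul, mul_pow, sq_abs, mul_comm]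

lemma kappaMinusSq_mul_le_l2norm_mulVec_sq (hB : B.card ≤ k) {v : Fin p → ℝ}
    (hv : ∀ i ∉ B, v i = 0) : kappaMinusSq X k * l2norm v ^ 2 ≤ l2norm (X *ᵥ v) ^ 2 := by
  rcases lt_or_ge p k with hk | hk
  · rw [kappaMinusSq_eq_zero_of_lt X hk, zero_mul]
    positivity
  rcases eq_or_ne v 0 with rfl | hv0
  · simp
  obtain ⟨B', hB', w, hw, hw1, hvw⟩ := exists_sparse_unit_smul hk hB hv hv0
  calc kappaMinusSq X k * l2norm v ^ 2 ≤ l2norm (X *ᵥ w) ^ 2 * l2norm v ^ 2 := by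
        gcongr
        exact kappaMinusSq_le_of_card_eq X hB' hw hw1
    _ = l2norm (X *ᵥ v) ^ 2 := by rw [← l2norm_mulVec_smul_sq, ← hvw]

lemma l2norm_mulVec_sq_le_kappaPlusSq_mul (hk : k ≤ p) (hB : B.card ≤ k) {v : Fin p → ℝ}
    (hv : ∀ i ∉ B, v i = 0) : l2norm (X *ᵥ v) ^ 2 ≤ kappaPlusSq X k * l2norm v ^ 2 := by
  rcases eq_or_ne v 0 with rfl | hv0
  · simp
  obtain ⟨B', hB', w, hw, hw1, hvw⟩ := exists_sparse_unit_smul hk hB hv hv0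
  calc l2norm (X *ᵥ v) ^ 2 = l2norm (X *ᵥ w) ^ 2 * l2norm v ^ 2 := by
        rw [← l2norm_mulVec_smul_sq, ← hvw]
    _ ≤ kappaPlusSq X k * l2norm v ^ 2 := by
        gcongr
        exact le_kappaPlusSq_of_card_eq X hB' hw hw1

lemma kappaMinusSq_mul_le_frobNorm_mul_sq (hB : B.card ≤ k) {U : Matrix (Fin p) (Fin m) ℝ}
    (hU : ∀ i ∉ B, U i = 0) : kappaMinusSq X k * frobNorm U ^ 2 ≤ frobNorm (X * U) ^ 2 := by
  rw [frobNorm_sq_eq_sum_col, frobNorm_sq_eq_sum_col, Finset.mul_sum]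
  exact Finset.sum_le_sum fun j _ =>
    kappaMinusSq_mul_le_l2norm_mulVec_sq X hB fun i hi => congrFun (hU i hi) j

lemma frobNorm_mul_sq_le_kappaPlusSq_mul (hk : k ≤ p) (hB : B.card ≤ k)
    {U : Matrix (Fin p) (Fin m) ℝ} (hU : ∀ i ∉ B, U i = 0) :
    frobNorm (X * U) ^ 2 ≤ kappaPlusSq X k * frobNorm U ^ 2 := by
  rw [frobNorm_sq_eq_sum_col, frobNorm_sq_eq_sum_col, Finset.mul_sum]
  exact Finset.sum_le_sum fun j _ =>
    l2norm_mulVec_sq_le_kappaPlusSq_mul X hk hB fun i hi => congrFun (hU i hi) j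

lemma frobNorm_mul_le_kappaPlus_mul (hk : k ≤ p) (hB : B.card ≤ k)
    {U : Matrix (Fin p) (Fin m) ℝ} (hU : ∀ i ∉ B, U i = 0) :
    frobNorm (X * U) ≤ kappaPlus X k * frobNorm U := by
  refine le_of_sq_le_sq ?_ (mul_nonneg (Real.sqrt_nonneg _) (frobNorm_nonneg U))
  rw [mul_pow, kappaPlus_sq]
  exact frobNorm_mul_sq_le_kappaPlusSq_mul X hk hB hU

lemma l2norm_col_le_kappaPlus (hk : k ≤ p) (hk1 : 1 ≤ k) (j : Fin p) :
    l2norm (Xᵀ j) ≤ kappaPlus X k := by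
  have hcol := l2norm_mulVec_sq_le_kappaPlusSq_mul X (B := {j}) (v := Pi.single j 1) hk (by simpa)
    (by simp +contextual)
  rw [mulVec_single_one, l2norm_single_one, one_pow, mul_one, ← kappaPlus_sq] at hcol
  exact le_of_sq_le_sq hcol (Real.sqrt_nonneg _)

lemma vec_dotProduct_vec_eq_zero_of_disjoint (hBC : Disjoint B C)
    {U W : Matrix (Fin p) (Fin m) ℝ} (hU : ∀ i ∉ B, U i = 0) (hW : ∀ i ∉ C, W i = 0) :
    U.vec ⬝ᵥ W.vec = 0 := by
  rw [vec_dotProduct_vec_eq_sum_row]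
  refine Finset.sum_eq_zero fun i _ => ?_
  by_cases hi : i ∈ B
  · rw [hW i (Finset.disjoint_left.1 hBC hi), dotProduct_zero]
  · rw [hU i hi, zero_dotProduct]

-- Comparing the two Riesz constants on `U + t • W` yields a quadratic in `t` that is nonnegative
-- everywhere; the claim is that its discriminant is nonpositive.
lemma abs_vec_dotProduct_vec_mul_le_of_disjoint (hk : k ≤ p) {δ : ℝ} (hδ : 0 ≤ δ)
    (hgap : kappaPlusSq X k - kappaMinusSq X (2 * k) ≤ δ) (hB : B.card ≤ k) (hC : C.card ≤ k)
    (hBC : Disjoint B C) {U W : Matrix (Fin p) (Fin m) ℝ} (hU : ∀ i ∉ B, U i = 0)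
    (hW : ∀ i ∉ C, W i = 0) :
    |(X * U).vec ⬝ᵥ (X * W).vec| ≤ δ * frobNorm U * frobNorm W := by
  set c := (X * U).vec ⬝ᵥ (X * W).vec with hc
  have hquad : ∀ t : ℝ, 0 ≤ (δ * frobNorm W ^ 2) * (t * t) + (2 * c) * t + δ * frobNorm U ^ 2 := by
    intro t
    have hsparse : ∀ i ∉ B ∪ C, (U + t • W) i = 0 := fun i hi => by
      rw [Finset.notMem_union] at hi
      ext j
      simp [hU i hi.1, hW i hi.2]
    have hlower := kappaMinusSq_mul_le_frobNorm_mul_sq X (k := 2 * k)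
      ((Finset.card_union_le B C).trans (by omega)) hsparse
    have hUW : frobNorm (U + t • W) ^ 2 = frobNorm U ^ 2 + t ^ 2 * frobNorm W ^ 2 := by
      rw [frobNorm_add_sq, vec_smul, dotProduct_smul,
        vec_dotProduct_vec_eq_zero_of_disjoint hBC hU hW, frobNorm_smul, mul_pow, sq_abs]
      simp
    have hXUW : frobNorm (X * (U + t • W)) ^ 2
        = frobNorm (X * U) ^ 2 + 2 * (t * c) + t ^ 2 * frobNorm (X * W) ^ 2 := by
      rw [Matrix.mul_add, Matrix.mul_smul, frobNorm_add_sq, vec_smul, dotProduct_smul,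
        frobNorm_smul, mul_pow, sq_abs, smul_eq_mul, hc]
    have hupperU := frobNorm_mul_sq_le_kappaPlusSq_mul X hk hB hU
    have hupperW := mul_le_mul_of_nonneg_left (frobNorm_mul_sq_le_kappaPlusSq_mul X hk hC hW)
      (sq_nonneg t)
    have hgapUW := mul_le_mul_of_nonneg_right hgap (sq_nonneg (frobNorm (U + t • W)))
    rw [hXUW] at hlower
    rw [hUW] at hlower hgapUW
    linarith
  have hdiscrim := discrim_le_zero hquad
  rw [discrim] at hdiscrim
  refine abs_le_of_sq_le_sq ?_ (by have := frobNorm_nonneg U; have := frobNorm_nonneg W; positivity)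
  linarith

end SparseRiesz

section RowRestriction

variable {I J : Type*}

/-- The matrix `D_T` that keeps the rows of `D` indexed by `T` and replaces all others by zero. -/
def restrictRows (D : Matrix I J ℝ) (T : Finset I) : Matrix I J ℝ :=
  of ((T : Set I).indicator D)

lemma restrictRows_of_mem (D : Matrix I J ℝ) {T : Finset I} {i : I} (hi : i ∈ T) :
    restrictRows D T i = D i :=
  indicator_of_mem (Finset.mem_coe.2 hi) D

lemma restrictRows_of_notMem (D : Matrix I J ℝ) {T : Finset I} {i : I} (hi : i ∉ T) :
    restrictRows D T i = 0 :=
  indicator_of_notMem (mt Finset.mem_coe.1 hi) D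

lemma restrictRows_empty (D : Matrix I J ℝ) : restrictRows D ∅ = 0 := by
  funext i
  exact restrictRows_of_notMem D (Finset.notMem_empty i)

lemma restrictRows_union [DecidableEq I] (D : Matrix I J ℝ) {T R : Finset I}
    (h : Disjoint T R) : restrictRows D (T ∪ R) = restrictRows D T + restrictRows D R := by
  have hset := indicator_union_of_disjoint (Finset.disjoint_coe.2 h) D
  rwa [← Finset.coe_union] at hset

variable [Fintype I]

lemma restrictRows_add_restrictRows_compl [DecidableEq I] (D : Matrix I J ℝ) (T : Finset I) :
    restrictRows D T + restrictRows D Tᶜ = D := by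
  rw [← restrictRows_union D disjoint_compl_right, Finset.union_compl]
  funext i
  exact restrictRows_of_mem D (Finset.mem_univ i)

variable [Fintype J]

lemma frobNorm_restrictRows_sq (D : Matrix I J ℝ) (T : Finset I) :
    frobNorm (restrictRows D T) ^ 2 = ∑ i ∈ T, l2norm (D i) ^ 2 := by
  rw [frobNorm_sq_eq_sum_row, ← Finset.sum_subset T.subset_univ fun i _ hi => by
    rw [restrictRows_of_notMem D hi, l2norm_zero, zero_pow two_ne_zero]]
  exact Finset.sum_congr rfl fun i hi => by rw [restrictRows_of_mem D hi]

lemma frobNorm_restrictRows_mono (D : Matrix I J ℝ) {S T : Finset I} (h : S ⊆ T) :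
    frobNorm (restrictRows D S) ≤ frobNorm (restrictRows D T) := by
  refine le_of_sq_le_sq ?_ (frobNorm_nonneg _)
  rw [frobNorm_restrictRows_sq, frobNorm_restrictRows_sq]
  exact Finset.sum_le_sum_of_subset_of_nonneg h fun _ _ _ => sq_nonneg _

lemma sum_l2norm_row_le_sqrt_mul_frobNorm_restrictRows (D : Matrix I J ℝ) {T : Finset I} {k : ℕ}
    (hT : T.card ≤ k) : ∑ i ∈ T, l2norm (D i) ≤ √k * frobNorm (restrictRows D T) := by
  refine le_of_sq_le_sq ?_ (mul_nonneg (Real.sqrt_nonneg _) (frobNorm_nonneg _))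
  rw [mul_pow, Real.sq_sqrt k.cast_nonneg, frobNorm_restrictRows_sq]
  refine sq_sum_le_card_mul_sum_sq.trans ?_
  gcongr

lemma frobNorm_restrictRows_le_sqrt_mul (D : Matrix I J ℝ) {T : Finset I} {k : ℕ}
    (hT : T.card ≤ k) {μ : ℝ} (hμ0 : 0 ≤ μ) (hμ : ∀ i ∈ T, l2norm (D i) ≤ μ) :
    frobNorm (restrictRows D T) ≤ √k * μ := by
  refine le_of_sq_le_sq ?_ (by positivity)
  rw [frobNorm_restrictRows_sq, mul_pow, Real.sq_sqrt k.cast_nonneg]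
  calc ∑ i ∈ T, l2norm (D i) ^ 2 ≤ ∑ _i ∈ T, μ ^ 2 :=
        Finset.sum_le_sum fun i hi => pow_le_pow_left₀ (l2norm_nonneg _) (hμ i hi) 2
    _ = T.card * μ ^ 2 := by rw [Finset.sum_const, nsmul_eq_mul]
    _ ≤ k * μ ^ 2 := by gcongr

end RowRestriction

section RestrictedEigenvalue

lemma exists_subset_card_eq_min_mul_le_sum {α : Type*} [DecidableEq α] (w : α → ℝ) (l : ℕ)
    (R : Finset α) :
    ∃ P ⊆ R, P.card = min l R.card ∧ ∀ j ∈ R \ P, l * w j ≤ ∑ i ∈ P, w i := by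
  induction l generalizing R with
  | zero => exact ⟨∅, by simp⟩
  | succ l ih =>
    rcases R.eq_empty_or_nonempty with rfl | hR
    · exact ⟨∅, by simp⟩
    obtain ⟨x, hx, hmax⟩ := R.exists_max_image w hR
    obtain ⟨P, hPR, hcard, hP⟩ := ih (R.erase x)
    have hxP : x ∉ P := fun h => by simpa using hPR h
    refine ⟨insert x P, Finset.insert_subset hx (hPR.trans (R.erase_subset x)), ?_, ?_⟩
    · rw [Finset.card_insert_of_notMem hxP, hcard, Finset.card_erase_of_mem hx]
      have := hR.card_pos
      omega
    · intro j hj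
      obtain ⟨hjR, hjx, hjP⟩ : j ∈ R ∧ j ≠ x ∧ j ∉ P := by simpa using hj
      have hsum := hP j (by simp [hjR, hjx, hjP])
      rw [Finset.sum_insert hxP]
      push_cast
      linarith [hmax j hjR]

variable {n p m k l : ℕ} (X : Matrix (Fin n) (Fin p) ℝ)

-- Peeling `R` into successive blocks of its `l` largest remaining rows, each block has Frobenius
-- norm at most `1 / √l` times the sum of the row norms of the block before it.
lemma exists_subset_abs_vec_dotProduct_vec_mul_restrictRows_le (hk : k ≤ p) {δ : ℝ} (hδ : 0 ≤ δ)
    (hgap : kappaPlusSq X k - kappaMinusSq X (2 * k) ≤ δ) (hl : 1 ≤ l) (hlk : l ≤ k)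
    (D : Matrix (Fin p) (Fin m) ℝ) (R : Finset (Fin p)) :
    ∃ P ⊆ R, P.card ≤ l ∧ ∀ (B : Finset (Fin p)) (U : Matrix (Fin p) (Fin m) ℝ),
      B.card ≤ k → (∀ i ∉ B, U i = 0) → Disjoint B (R \ P) →
      |(X * U).vec ⬝ᵥ (X * restrictRows D (R \ P)).vec| ≤
        δ * frobNorm U * ((∑ i ∈ R, l2norm (D i)) / √l) := by
  induction R using Finset.strongInduction with
  | H R ih =>
    rcases R.eq_empty_or_nonempty with rfl | hR
    · exact ⟨∅, by simp [restrictRows_empty]⟩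
    obtain ⟨P, hPR, hPcard, hP⟩ :=
      exists_subset_card_eq_min_mul_le_sum (fun i => l2norm (D i)) l R
    have hPne : P.Nonempty := by
      rw [← Finset.card_pos, hPcard]
      exact lt_min hl hR.card_pos
    obtain ⟨Q, hQ, hQcard, hQcross⟩ := ih (R \ P) (Finset.sdiff_ssubset hPR hPne)
    refine ⟨P, hPR, hPcard.trans_le (min_le_left _ _), fun B U hB hU hdisj => ?_⟩
    have hl0 : (0 : ℝ) < l := by exact_mod_cast hl
    have hδU : 0 ≤ δ * frobNorm U := mul_nonneg hδ (frobNorm_nonneg U)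
    have hP0 : 0 ≤ ∑ i ∈ P, l2norm (D i) := Finset.sum_nonneg fun _ _ => l2norm_nonneg _
    have hQblock : frobNorm (restrictRows D Q) ≤ (∑ i ∈ P, l2norm (D i)) / √l := by
      have hle := frobNorm_restrictRows_le_sqrt_mul D hQcard (div_nonneg hP0 hl0.le)
        fun i hi => (le_div_iff₀' hl0).2 (hP i (hQ hi))
      rwa [mul_div_left_comm, Real.sqrt_div_self', mul_one_div] at hle
    have hQnear := abs_vec_dotProduct_vec_mul_le_of_disjoint X hk hδ hgap hB (hQcard.trans hlk)
      (hdisj.mono_right hQ) hU fun i => restrictRows_of_notMem D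
    have hfar := hQcross B U hB hU (hdisj.mono_right Finset.sdiff_subset)
    have hsplit : restrictRows D (R \ P) = restrictRows D Q + restrictRows D ((R \ P) \ Q) := by
      rw [← restrictRows_union D Finset.disjoint_sdiff, Finset.union_sdiff_of_subset hQ]
    calc |(X * U).vec ⬝ᵥ (X * restrictRows D (R \ P)).vec|
        ≤ |(X * U).vec ⬝ᵥ (X * restrictRows D Q).vec|
          + |(X * U).vec ⬝ᵥ (X * restrictRows D ((R \ P) \ Q)).vec| := by
          rw [hsplit, Matrix.mul_add, vec_add, dotProduct_add]
          exact abs_add_le _ _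
      _ ≤ δ * frobNorm U * ((∑ i ∈ P, l2norm (D i)) / √l)
          + δ * frobNorm U * ((∑ i ∈ R \ P, l2norm (D i)) / √l) := by
          gcongr
          exact hQnear.trans (mul_le_mul_of_nonneg_left hQblock hδU)
      _ = δ * frobNorm U * ((∑ i ∈ R, l2norm (D i)) / √l) := by
          rw [← mul_add, ← add_div, add_comm, Finset.sum_sdiff hPR]

lemma exists_superset_abs_vec_dotProduct_vec_mul_restrictRows_compl_le (hk : k ≤ p) {δ : ℝ}
    (hδ : 0 ≤ δ) (hgap : kappaPlusSq X k - kappaMinusSq X (2 * k) ≤ δ) (hl : 1 ≤ l)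
    {S : Finset (Fin p)} (hS : S.card + l ≤ k) (D : Matrix (Fin p) (Fin m) ℝ) :
    ∃ T, S ⊆ T ∧ T.card ≤ k ∧
      |(X * restrictRows D T).vec ⬝ᵥ (X * restrictRows D Tᶜ).vec| ≤
        δ * frobNorm (restrictRows D T) * ((∑ i ∈ Sᶜ, l2norm (D i)) / √l) := by
  obtain ⟨P, -, hPcard, hP⟩ := exists_subset_abs_vec_dotProduct_vec_mul_restrictRows_le X hk hδ hgap
    hl (by omega : l ≤ k) D Sᶜ
  have hcompl : (S ∪ P)ᶜ = Sᶜ \ P := by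
    rw [Finset.compl_union, Finset.sdiff_eq_inter_compl]
  have hcard : (S ∪ P).card ≤ k := (Finset.card_union_le S P).trans (by omega)
  refine ⟨S ∪ P, Finset.subset_union_left, hcard, ?_⟩
  rw [hcompl]
  exact hP _ _ hcard (fun i => restrictRows_of_notMem D) (hcompl ▸ disjoint_compl_right)

lemma kappaMinusSq_half_mul_frobNorm_restrictRows_le (hk : k ≤ p) {T : Finset (Fin p)}
    (hT : T.card ≤ k) (D : Matrix (Fin p) (Fin m) ℝ)
    (hcross : |(X * restrictRows D T).vec ⬝ᵥ (X * restrictRows D Tᶜ).vec| ≤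
      kappaMinusSq X k / 2 * frobNorm (restrictRows D T) ^ 2) :
    kappaMinusSq X k / 2 * frobNorm (restrictRows D T) ≤ kappaPlus X k * frobNorm (X * D) := by
  have hsupp : ∀ i ∉ T, restrictRows D T i = 0 := fun i => restrictRows_of_notMem D
  have hlower := kappaMinusSq_mul_le_frobNorm_mul_sq X hT hsupp
  have hinner : (X * restrictRows D T).vec ⬝ᵥ (X * D).vec = frobNorm (X * restrictRows D T) ^ 2
      + (X * restrictRows D T).vec ⬝ᵥ (X * restrictRows D Tᶜ).vec := by
    rw [frobNorm_eq_l2norm_vec, l2norm_sq_eq_dotProduct, ← dotProduct_add, ← vec_add,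
      ← Matrix.mul_add, restrictRows_add_restrictRows_compl]
  rcases (frobNorm_nonneg (restrictRows D T)).eq_or_lt with h0 | hpos
  · rw [← h0, mul_zero]
    exact mul_nonneg (Real.sqrt_nonneg _) (frobNorm_nonneg _)
  refine le_of_mul_le_mul_right ?_ hpos
  calc kappaMinusSq X k / 2 * frobNorm (restrictRows D T) * frobNorm (restrictRows D T)
      ≤ (X * restrictRows D T).vec ⬝ᵥ (X * D).vec := by
        rw [hinner]
        linarith [(abs_le.1 hcross).1]
    _ ≤ frobNorm (X * restrictRows D T) * frobNorm (X * D) :=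
        vec_dotProduct_le_frobNorm_mul_frobNorm _ _
    _ ≤ kappaPlus X k * frobNorm (restrictRows D T) * frobNorm (X * D) :=
        mul_le_mul_of_nonneg_right (frobNorm_mul_le_kappaPlus_mul X hk hT hsupp) (frobNorm_nonneg _)
    _ = kappaPlus X k * frobNorm (X * D) * frobNorm (restrictRows D T) := by ring

lemma sqrt_div_sub_one_eq {s k : ℕ} (hs : 1 ≤ s) (hsk : s ≤ k) :
    √((k : ℝ) / s - 1) = √(k - s : ℕ) / √s := by
  have hs0 : (s : ℝ) ≠ 0 := by positivity
  rw [← Real.sqrt_div (Nat.cast_nonneg _), Nat.cast_sub hsk, sub_div, div_self hs0]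

lemma kappaMinusSq_half_mul_frobNorm_restrictRows_le_of_cone {s : ℕ} (hk : k ≤ p) (hs : 1 ≤ s)
    (hsk : s < k) {c α : ℝ} (hc : 0 ≤ c) (hα : 0 ≤ α) (hcα : 2 * α * c ≤ √((k : ℝ) / s - 1))
    (hgap : kappaPlusSq X k - kappaMinusSq X (2 * k) ≤ c * kappaMinusSq X k)
    {S : Finset (Fin p)} (hS : S.card ≤ s) (D : Matrix (Fin p) (Fin m) ℝ)
    (hcone : ∑ i ∈ Sᶜ, l2norm (D i) ≤ α * ∑ i ∈ S, l2norm (D i)) :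
    kappaMinusSq X k / 2 * frobNorm (restrictRows D S) ≤ kappaPlus X k * frobNorm (X * D) := by
  have hκ := kappaMinusSq_nonneg X k
  obtain ⟨T, hST, hT, hcross⟩ := exists_superset_abs_vec_dotProduct_vec_mul_restrictRows_compl_le X
    hk (mul_nonneg hc hκ) hgap (l := k - s) (by omega) (by omega : S.card + (k - s) ≤ k) D
  have hFST := frobNorm_restrictRows_mono D hST
  have hFT := frobNorm_nonneg (restrictRows D T)
  have htail : c * ((∑ i ∈ Sᶜ, l2norm (D i)) / √(k - s : ℕ)) ≤ frobNorm (restrictRows D S) / 2 := by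
    have hs0 : 0 < √(s : ℝ) := Real.sqrt_pos.2 (by exact_mod_cast hs)
    have hks0 : 0 < √((k - s : ℕ) : ℝ) := Real.sqrt_pos.2 (by exact_mod_cast Nat.sub_pos_of_lt hsk)
    rw [sqrt_div_sub_one_eq hs hsk.le, le_div_iff₀ hs0] at hcα
    rw [← mul_div_assoc, div_le_iff₀ hks0]
    calc c * ∑ i ∈ Sᶜ, l2norm (D i) ≤ c * (α * (√s * frobNorm (restrictRows D S))) := by
          gcongr
          exact hcone.trans (mul_le_mul_of_nonneg_left
            (sum_l2norm_row_le_sqrt_mul_frobNorm_restrictRows D hS) hα)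
      _ = 2 * α * c * √s * (frobNorm (restrictRows D S) / 2) := by ring
      _ ≤ √(k - s : ℕ) * (frobNorm (restrictRows D S) / 2) := by
          gcongr
          exact div_nonneg (frobNorm_nonneg _) zero_le_two
      _ = frobNorm (restrictRows D S) / 2 * √(k - s : ℕ) := mul_comm _ _
  calc kappaMinusSq X k / 2 * frobNorm (restrictRows D S)
      ≤ kappaMinusSq X k / 2 * frobNorm (restrictRows D T) := by gcongr
    _ ≤ kappaPlus X k * frobNorm (X * D) := by
        refine kappaMinusSq_half_mul_frobNorm_restrictRows_le X hk hT D (hcross.trans ?_)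
        calc c * kappaMinusSq X k * frobNorm (restrictRows D T)
              * ((∑ i ∈ Sᶜ, l2norm (D i)) / √(k - s : ℕ))
            = kappaMinusSq X k * frobNorm (restrictRows D T)
              * (c * ((∑ i ∈ Sᶜ, l2norm (D i)) / √(k - s : ℕ))) := by ring
          _ ≤ kappaMinusSq X k * frobNorm (restrictRows D T)
              * (frobNorm (restrictRows D T) / 2) := by
              gcongr
              linarith
          _ = kappaMinusSq X k / 2 * frobNorm (restrictRows D T) ^ 2 := by ring

end RestrictedEigenvalue

section GroupLasso

variable {n p m k s : ℕ} {X : Matrix (Fin n) (Fin p) ℝ} {A A₀ : Matrix (Fin p) (Fin m) ℝ}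
  {Z : Matrix (Fin n) (Fin m) ℝ} {lam : ℝ}

lemma vec_dotProduct_vec_mul_le_norm21 {I J K : Type*} [Fintype I] [Fintype J] [Fintype K]
    (X : Matrix K I ℝ) (Z : Matrix K J ℝ) (D : Matrix I J ℝ) {μ : ℝ}
    (hZ : ∀ i, l2norm ((Xᵀ * Z) i) ≤ μ) : Z.vec ⬝ᵥ (X * D).vec ≤ μ * norm21 D := by
  rw [vec_dotProduct_vec_mul, vec_dotProduct_vec_eq_sum_row, norm21, Finset.mul_sum]
  exact Finset.sum_le_sum fun i _ => (dotProduct_le_l2norm_mul_l2norm _ _).trans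
    (mul_le_mul_of_nonneg_right (hZ i) (l2norm_nonneg _))

lemma norm21_sub_norm21_le {I J : Type*} [Fintype I] [DecidableEq I] [Fintype J]
    (A A₀ : Matrix I J ℝ) {S : Finset I} (hS : ∀ i ∉ S, A i = 0) :
    norm21 A - norm21 A₀ ≤
      ∑ i ∈ S, l2norm ((A₀ - A) i) - ∑ i ∈ Sᶜ, l2norm ((A₀ - A) i) := by
  have hon : ∑ i ∈ S, l2norm (A i) ≤ ∑ i ∈ S, l2norm (A₀ i) + ∑ i ∈ S, l2norm ((A₀ - A) i) := by
    rw [← Finset.sum_add_distrib]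
    refine Finset.sum_le_sum fun i _ => ?_
    have htri := l2norm_le_l2norm_add_l2norm_sub (A i) (A₀ i)
    rwa [← neg_sub (A₀ i), ← neg_one_smul ℝ, l2norm_smul, abs_neg, abs_one, one_mul] at htri
  have hoffA : ∑ i ∈ Sᶜ, l2norm (A i) = 0 := Finset.sum_eq_zero fun i hi => by
    rw [hS i (Finset.mem_compl.1 hi), l2norm_zero]
  have hoff : ∑ i ∈ Sᶜ, l2norm ((A₀ - A) i) = ∑ i ∈ Sᶜ, l2norm (A₀ i) :=
    Finset.sum_congr rfl fun i hi => congrArg l2norm <|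
      show A₀ i - A i = A₀ i by rw [hS i (Finset.mem_compl.1 hi), sub_zero]
  rw [norm21, norm21, ← Finset.sum_add_sum_compl S, ← Finset.sum_add_sum_compl S (l2norm <| A₀ ·)]
  linarith

lemma groupLasso_basic_inequality (hlam : 0 ≤ lam)
    (hmin : frobNorm (X * A + Z - X * A₀) ^ 2 / 2 + lam * norm21 A₀ ≤
      frobNorm (X * A + Z - X * A) ^ 2 / 2 + lam * norm21 A)
    (hZ : ∀ j, l2norm ((Xᵀ * Z) j) ≤ lam / 2) {S : Finset (Fin p)} (hS : ∀ i ∉ S, A i = 0) :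
    frobNorm (X * (A₀ - A)) ^ 2 ≤
      lam * (3 * ∑ i ∈ S, l2norm ((A₀ - A) i) - ∑ i ∈ Sᶜ, l2norm ((A₀ - A) i)) := by
  have hnoise := vec_dotProduct_vec_mul_le_norm21 X Z (A₀ - A) hZ
  rw [norm21, ← Finset.sum_add_sum_compl S] at hnoise
  have hpenalty := mul_le_mul_of_nonneg_left (norm21_sub_norm21_le A A₀ hS) hlam
  have hresidual : frobNorm (X * A + Z - X * A₀) ^ 2 =
      frobNorm Z ^ 2 - 2 * (Z.vec ⬝ᵥ (X * (A₀ - A)).vec) + frobNorm (X * (A₀ - A)) ^ 2 := by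
    have : X * A + Z - X * A₀ = Z + -(X * (A₀ - A)) := by
      rw [Matrix.mul_sub]
      abel
    rw [this, frobNorm_add_sq, frobNorm_neg, vec_neg, dotProduct_neg]
    ring
  rw [hresidual, add_sub_cancel_left] at hmin
  linarith

lemma groupLasso_prediction_error_le (hlam : 0 ≤ lam)
    (hmin : frobNorm (X * A + Z - X * A₀) ^ 2 / 2 + lam * norm21 A₀ ≤
      frobNorm (X * A + Z - X * A) ^ 2 / 2 + lam * norm21 A)
    (hZ : ∀ j, l2norm ((Xᵀ * Z) j) ≤ lam / 2) (hA : (rowSupport A).card ≤ s)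
    (hk : k ≤ p) (hs : 1 ≤ s) (hsk : s < k) {c : ℝ} (hc : 0 ≤ c)
    (hck : 6 * c ≤ √((k : ℝ) / s - 1))
    (hgap : kappaPlusSq X k - kappaMinusSq X (2 * k) ≤ c * kappaMinusSq X k) :
    kappaMinusSq X k * frobNorm (X * (A₀ - A)) ≤ 6 * lam * √s * kappaPlus X k := by
  have hsupp : ∀ i ∉ rowSupport A, A i = 0 := fun i hi => by simpa [rowSupport] using hi
  have hbasic := groupLasso_basic_inequality hlam hmin hZ hsupp
  rcases (frobNorm_nonneg (X * (A₀ - A))).eq_or_lt with h0 | hpos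
  · have := Real.sqrt_nonneg (kappaPlusSq X k)
    rw [← h0, mul_zero, kappaPlus]
    positivity
  have hcone : ∑ i ∈ (rowSupport A)ᶜ, l2norm ((A₀ - A) i) ≤
      3 * ∑ i ∈ rowSupport A, l2norm ((A₀ - A) i) :=
    (sub_pos.1 (pos_of_mul_pos_right ((pow_pos hpos 2).trans_le hbasic) hlam)).le
  have hre := kappaMinusSq_half_mul_frobNorm_restrictRows_le_of_cone X hk hs hsk hc zero_le_three
    (by linarith) hgap hA (A₀ - A) hcone
  have hrows := sum_l2norm_row_le_sqrt_mul_frobNorm_restrictRows (A₀ - A) hA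
  have hoff : 0 ≤ ∑ i ∈ (rowSupport A)ᶜ, l2norm ((A₀ - A) i) :=
    Finset.sum_nonneg fun _ _ => l2norm_nonneg _
  have hκ := kappaMinusSq_nonneg X k
  refine le_of_mul_le_mul_right ?_ hpos
  calc kappaMinusSq X k * frobNorm (X * (A₀ - A)) * frobNorm (X * (A₀ - A))
      = kappaMinusSq X k * frobNorm (X * (A₀ - A)) ^ 2 := by ring
    _ ≤ kappaMinusSq X k *
          (lam * (3 * (√s * frobNorm (restrictRows (A₀ - A) (rowSupport A))))) := by
        gcongr
        refine hbasic.trans (mul_le_mul_of_nonneg_left ?_ hlam)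
        linarith
    _ = 6 * lam * √s *
        (kappaMinusSq X k / 2 * frobNorm (restrictRows (A₀ - A) (rowSupport A))) := by ring
    _ ≤ 6 * lam * √s * (kappaPlus X k * frobNorm (X * (A₀ - A))) := by gcongr
    _ = 6 * lam * √s * kappaPlus X k * frobNorm (X * (A₀ - A)) := by ring

end GroupLasso

section SingularValues

variable {I J : Type*} [Fintype I] [Fintype J]

/-- The smallest gain `‖M v‖` of `M` over the unit vectors `v` of the subspace `V`, that is the
inner minimum in the Courant–Fischer formula. It is `0` for `V = ⊥`. -/
def minGain (M : Matrix I J ℝ) (V : Submodule ℝ (J → ℝ)) : ℝ :=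
  sInf {u | ∃ v ∈ V, l2norm v = 1 ∧ u = l2norm (M *ᵥ v)}

lemma minGain_nonneg (M : Matrix I J ℝ) (V : Submodule ℝ (J → ℝ)) : 0 ≤ minGain M V := by
  refine Real.sInf_nonneg ?_
  rintro _ ⟨v, -, -, rfl⟩
  exact l2norm_nonneg _

lemma minGain_le (M : Matrix I J ℝ) {V : Submodule ℝ (J → ℝ)} {v : J → ℝ} (hv : v ∈ V)
    (hv1 : l2norm v = 1) : minGain M V ≤ l2norm (M *ᵥ v) := by
  refine csInf_le ⟨0, ?_⟩ ⟨v, hv, hv1, rfl⟩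
  rintro _ ⟨w, -, -, rfl⟩
  exact l2norm_nonneg _

lemma minGain_bot (M : Matrix I J ℝ) : minGain M ⊥ = 0 := by
  simp [minGain]

lemma exists_mem_l2norm_eq_one {V : Submodule ℝ (J → ℝ)} (hV : V ≠ ⊥) :
    ∃ v ∈ V, l2norm v = 1 := by
  obtain ⟨v, hv, hv0⟩ := Submodule.exists_mem_ne_zero_of_ne_bot hV
  have hnorm : l2norm v ≠ 0 := mt l2norm_eq_zero.1 hv0
  refine ⟨(l2norm v)⁻¹ • v, V.smul_mem _ hv, ?_⟩
  rw [l2norm_smul, abs_inv, abs_of_nonneg (l2norm_nonneg v), inv_mul_cancel₀ hnorm]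

lemma le_minGain (M : Matrix I J ℝ) {V : Submodule ℝ (J → ℝ)} (hV : V ≠ ⊥) {c : ℝ}
    (h : ∀ v ∈ V, l2norm v = 1 → c ≤ l2norm (M *ᵥ v)) : c ≤ minGain M V := by
  obtain ⟨v, hv, hv1⟩ := exists_mem_l2norm_eq_one hV
  refine le_csInf ⟨_, v, hv, hv1, rfl⟩ ?_
  rintro _ ⟨w, hw, hw1, rfl⟩
  exact h w hw hw1

lemma minGain_le_frobNorm (M : Matrix I J ℝ) (V : Submodule ℝ (J → ℝ)) :
    minGain M V ≤ frobNorm M := by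
  rcases eq_or_ne V ⊥ with rfl | hV
  · rw [minGain_bot]
    exact frobNorm_nonneg M
  · obtain ⟨v, hv, hv1⟩ := exists_mem_l2norm_eq_one hV
    simpa only [hv1, mul_one] using (minGain_le M hv hv1).trans (l2norm_mulVec_le M v)

lemma minGain_le_minGain_add_frobNorm_sub (M N : Matrix I J ℝ) (V : Submodule ℝ (J → ℝ)) :
    minGain M V ≤ minGain N V + frobNorm (M - N) := by
  rcases eq_or_ne V ⊥ with rfl | hV
  · simpa only [minGain_bot, zero_add] using frobNorm_nonneg (M - N)
  refine sub_le_iff_le_add.1 (le_minGain N hV fun v hv hv1 => sub_le_iff_le_add.2 ?_)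
  calc minGain M V ≤ l2norm (M *ᵥ v) := minGain_le M hv hv1
    _ ≤ l2norm (N *ᵥ v) + l2norm (M *ᵥ v - N *ᵥ v) := l2norm_le_l2norm_add_l2norm_sub _ _
    _ ≤ l2norm (N *ᵥ v) + frobNorm (M - N) := by
        rw [← sub_mulVec]
        simpa only [hv1, mul_one] using
          add_le_add_right (l2norm_mulVec_le (M - N) v) (l2norm (N *ᵥ v))

lemma minGain_anti (M : Matrix I J ℝ) {V W : Submodule ℝ (J → ℝ)} (hW : W ≠ ⊥) (hWV : W ≤ V) :
    minGain M V ≤ minGain M W :=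
  le_minGain M hW fun _ hv hv1 => minGain_le M (hWV hv) hv1

lemma minGain_eq_zero_of_rank_lt_finrank (M : Matrix I J ℝ) {V : Submodule ℝ (J → ℝ)}
    (hV : M.rank < Module.finrank ℝ V) : minGain M V = 0 := by
  have hker : V ⊓ LinearMap.ker M.mulVecLin ≠ ⊥ := fun h => by
    have hle := Submodule.finrank_add_finrank_le_of_disjoint (disjoint_iff.2 h)
    rw [← M.mulVecLin.finrank_range_add_finrank_ker] at hle
    exact hV.not_ge (Nat.le_of_add_le_add_right hle)
  obtain ⟨v, ⟨hv, hMv⟩, hv1⟩ := exists_mem_l2norm_eq_one hker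
  have hMv0 : M *ᵥ v = 0 := hMv
  refine le_antisymm ?_ (minGain_nonneg M V)
  simpa only [hMv0, l2norm_zero] using minGain_le M hv hv1

lemma singularValue_nonneg (M : Matrix I J ℝ) (j : ℕ) : 0 ≤ singularValue M j := by
  refine Real.sSup_nonneg ?_
  rintro _ ⟨V, -, rfl⟩
  exact minGain_nonneg M V

lemma minGain_le_singularValue (M : Matrix I J ℝ) (V : Submodule ℝ (J → ℝ)) :
    minGain M V ≤ singularValue M (Module.finrank ℝ V) := by
  refine le_csSup ⟨frobNorm M, ?_⟩ ⟨V, rfl, rfl⟩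
  rintro _ ⟨W, -, rfl⟩
  exact minGain_le_frobNorm M W

lemma singularValue_le (M : Matrix I J ℝ) {j : ℕ} {c : ℝ} (hc : 0 ≤ c)
    (h : ∀ V : Submodule ℝ (J → ℝ), Module.finrank ℝ V = j → minGain M V ≤ c) :
    singularValue M j ≤ c := by
  refine Real.sSup_le ?_ hc
  rintro _ ⟨V, hV, rfl⟩
  exact h V hV

lemma singularValue_le_singularValue_add_frobNorm_sub (M N : Matrix I J ℝ) (j : ℕ) :
    singularValue M j ≤ singularValue N j + frobNorm (M - N) := by
  refine singularValue_le M (add_nonneg (singularValue_nonneg N j) (frobNorm_nonneg _)) ?_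
  rintro V rfl
  exact (minGain_le_minGain_add_frobNorm_sub M N V).trans
    (add_le_add_left (minGain_le_singularValue N V) _)

lemma abs_singularValue_sub_singularValue_le (M N : Matrix I J ℝ) (j : ℕ) :
    |singularValue M j - singularValue N j| ≤ frobNorm (M - N) := by
  have hMN := singularValue_le_singularValue_add_frobNorm_sub M N j
  have hNM := singularValue_le_singularValue_add_frobNorm_sub N M j
  rw [← neg_sub M N, frobNorm_neg] at hNM
  exact abs_sub_le_iff.2 ⟨by linarith, by linarith⟩

lemma exists_le_finrank_eq {K E : Type*} [DivisionRing K] [AddCommGroup E] [Module K E]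
    [FiniteDimensional K E] (V : Submodule K E) {j : ℕ} (hj : j ≤ Module.finrank K V) :
    ∃ W ≤ V, Module.finrank K W = j := by
  obtain ⟨f, hf⟩ := exists_linearIndependent_of_le_finrank hj
  have hfV : LinearIndependent K (V.subtype ∘ f) := hf.map' V.subtype V.ker_subtype
  refine ⟨Submodule.span K (range (V.subtype ∘ f)), ?_, ?_⟩
  · rw [Submodule.span_le]
    rintro _ ⟨i, rfl⟩
    exact (f i).2
  · rw [finrank_span_eq_card hfV, Fintype.card_fin]

lemma singularValue_anti (M : Matrix I J ℝ) {i j : ℕ} (hi : 1 ≤ i) (hij : i ≤ j) :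
    singularValue M j ≤ singularValue M i := by
  refine singularValue_le M (singularValue_nonneg M i) ?_
  rintro V rfl
  obtain ⟨W, hWV, rfl⟩ := exists_le_finrank_eq V hij
  exact (minGain_anti M (Submodule.one_le_finrank_iff.1 hi) hWV).trans
    (minGain_le_singularValue M W)

lemma singularValue_eq_zero_of_rank_lt (M : Matrix I J ℝ) {j : ℕ} (hj : M.rank < j) :
    singularValue M j = 0 := by
  refine le_antisymm (singularValue_le M le_rfl ?_) (singularValue_nonneg M j)
  rintro V rfl
  exact (minGain_eq_zero_of_rank_lt_finrank M hj).le

end SingularValues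

section RightSingularVectors

variable {I J : Type*} [Fintype I] [Fintype J] {r : ℕ}

lemma l2norm_mulVec_sq (M : Matrix I J ℝ) (v : J → ℝ) :
    l2norm (M *ᵥ v) ^ 2 = v ⬝ᵥ (Mᵀ * M) *ᵥ v := by
  rw [l2norm_sq_eq_dotProduct, ← dotProduct_transpose_mulVec, mulVec_mulVec]

lemma l2norm_mulVec_of_transpose_mul_self [DecidableEq J] {V : Matrix I J ℝ} (hV : Vᵀ * V = 1)
    (x : J → ℝ) : l2norm (V *ᵥ x) = l2norm x := by
  refine (pow_left_inj₀ (l2norm_nonneg _) (l2norm_nonneg _) two_ne_zero).1 ?_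
  rw [l2norm_mulVec_sq, hV, one_mulVec, l2norm_sq_eq_dotProduct]

lemma rank_eq_card_of_transpose_mul_self [DecidableEq J] {V : Matrix I J ℝ} (hV : Vᵀ * V = 1) :
    V.rank = Fintype.card J := by
  rw [← rank_transpose_mul_self, hV, rank_one]

namespace IsRightSingularVectors

variable {M M₀ : Matrix I J ℝ} {V V₀ : Matrix J (Fin r) ℝ}

lemma transpose_mul_self_mul (hV : IsRightSingularVectors M V) :
    Mᵀ * M * V = V * diagonal fun j : Fin r => singularValue M (j + 1) ^ 2 := by
  ext i j
  rw [mul_diagonal, mul_comm]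
  exact congrFun (hV.2 j) i

-- The factor is `W = U Σ⁻¹`, where `U` holds the corresponding left singular vectors.
lemma exists_transpose_mul_eq (hV : IsRightSingularVectors M V) (hpos : 0 < singularValue M r) :
    ∃ W : Matrix I (Fin r) ℝ, Mᵀ * W = V ∧
      ∀ x, singularValue M r * l2norm (W *ᵥ x) ≤ l2norm x := by
  have hle (j : Fin r) : singularValue M r ≤ singularValue M (j + 1) :=
    singularValue_anti M (Nat.succ_pos j) j.2
  set d : Fin r → ℝ := fun j => singularValue M (j + 1) ^ 2
  have hd0 (j : Fin r) : 0 < d j := pow_pos (hpos.trans_le (hle j)) 2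
  have hdinv : diagonal d * diagonal d⁻¹ = 1 := by
    rw [diagonal_mul_diagonal, ← diagonal_one]
    exact congrArg diagonal (funext fun j => mul_inv_cancel₀ (hd0 j).ne')
  have hW : Mᵀ * (M * V * diagonal d⁻¹) = V := by
    rw [← Matrix.mul_assoc, ← Matrix.mul_assoc, hV.transpose_mul_self_mul, Matrix.mul_assoc, hdinv,
      Matrix.mul_one]
  refine ⟨M * V * diagonal d⁻¹, hW, fun x => le_of_sq_le_sq ?_ (l2norm_nonneg x)⟩
  have hWW : (M * V * diagonal d⁻¹)ᵀ * (M * V * diagonal d⁻¹) = diagonal d⁻¹ := by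
    rw [transpose_mul, transpose_mul, diagonal_transpose, Matrix.mul_assoc, Matrix.mul_assoc, hW,
      hV.1, Matrix.mul_one]
  rw [mul_pow, l2norm_mulVec_sq, hWW, l2norm_sq, dotProduct, Finset.mul_sum]
  refine Finset.sum_le_sum fun j _ => ?_
  calc singularValue M r ^ 2 * (x j * (diagonal d⁻¹ *ᵥ x) j)
      = singularValue M r ^ 2 / d j * x j ^ 2 := by
        rw [mulVec_diagonal, Pi.inv_apply]
        ring
    _ ≤ 1 * x j ^ 2 := by
        gcongr
        exact (div_le_one (hd0 j)).2 (pow_le_pow_left₀ hpos.le (hle j) 2)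
    _ = x j ^ 2 := one_mul _

lemma singularValue_mul_dotProduct_mulVec_le (hV : IsRightSingularVectors M V)
    (hpos : 0 < singularValue M r) (u : J → ℝ) (x : Fin r → ℝ) :
    singularValue M r * (u ⬝ᵥ V *ᵥ x) ≤ l2norm (M *ᵥ u) * l2norm x := by
  obtain ⟨W, hW, hWx⟩ := hV.exists_transpose_mul_eq hpos
  calc singularValue M r * (u ⬝ᵥ V *ᵥ x) = singularValue M r * (M *ᵥ u ⬝ᵥ W *ᵥ x) := by
        rw [← hW, ← mulVec_mulVec, dotProduct_transpose_mulVec, dotProduct_comm]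
    _ ≤ singularValue M r * (l2norm (M *ᵥ u) * l2norm (W *ᵥ x)) :=
        mul_le_mul_of_nonneg_left (dotProduct_le_l2norm_mul_l2norm _ _) hpos.le
    _ = l2norm (M *ᵥ u) * (singularValue M r * l2norm (W *ᵥ x)) := by ring
    _ ≤ l2norm (M *ᵥ u) * l2norm x := mul_le_mul_of_nonneg_left (hWx x) (l2norm_nonneg _)

lemma range_mulVecLin (hV : IsRightSingularVectors M V) (hpos : 0 < singularValue M r)
    (hrank : M.rank ≤ r) : LinearMap.range V.mulVecLin = LinearMap.range Mᵀ.mulVecLin := by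
  obtain ⟨W, hW, -⟩ := hV.exists_transpose_mul_eq hpos
  refine Submodule.eq_of_le_of_finrank_le ?_ ?_
  · rw [← hW, mulVecLin_mul]
    exact LinearMap.range_comp_le_range _ _
  · calc Mᵀ.rank ≤ r := (rank_transpose M).trans_le hrank
      _ = V.rank := by rw [rank_eq_card_of_transpose_mul_self hV.1, Fintype.card_fin]

lemma mulVec_eq_zero (hV : IsRightSingularVectors M V) (hpos : 0 < singularValue M r)
    (hrank : M.rank ≤ r) {u : J → ℝ} (hu : Vᵀ *ᵥ u = 0) : M *ᵥ u = 0 := by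
  obtain ⟨w, hw⟩ : Mᵀ *ᵥ (M *ᵥ u) ∈ LinearMap.range V.mulVecLin := by
    rw [hV.range_mulVecLin hpos hrank]
    exact ⟨_, rfl⟩
  rw [← l2norm_eq_zero, ← sq_eq_zero_iff, l2norm_sq_eq_dotProduct, ← dotProduct_transpose_mulVec,
    ← hw, mulVecLin_apply, dotProduct_comm, dotProduct_comm, ← dotProduct_transpose_mulVec, hu,
    dotProduct_zero]

lemma singularValue_mul_l2norm_sub_mulVec_transpose_mulVec_le (hV : IsRightSingularVectors M V)
    (hrank : M.rank ≤ r) (hpos : 0 < singularValue M r) (hV₀ : IsRightSingularVectors M₀ V₀)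
    (hpos₀ : 0 < singularValue M₀ r) (x : Fin r → ℝ) :
    singularValue M₀ r * l2norm (V₀ *ᵥ x - V *ᵥ (Vᵀ *ᵥ (V₀ *ᵥ x))) ≤
      frobNorm (M₀ - M) * l2norm x := by
  set u := V₀ *ᵥ x - V *ᵥ (Vᵀ *ᵥ (V₀ *ᵥ x)) with hu
  have horth : Vᵀ *ᵥ u = 0 := by
    rw [hu, mulVec_sub, mulVec_mulVec (M := Vᵀ) (N := V), hV.1, one_mulVec, sub_self]
  have hsq : l2norm u ^ 2 = u ⬝ᵥ V₀ *ᵥ x := by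
    rw [l2norm_sq_eq_dotProduct]
    nth_rw 2 [hu]
    rw [dotProduct_sub, ← dotProduct_transpose_mulVec V, horth, dotProduct_zero, sub_zero]
  have hgain : l2norm (M₀ *ᵥ u) ≤ frobNorm (M₀ - M) * l2norm u := by
    simpa only [sub_mulVec, hV.mulVec_eq_zero hpos hrank horth, sub_zero] using
      l2norm_mulVec_le (M₀ - M) u
  rcases (l2norm_nonneg u).eq_or_lt with h0 | hu0
  · rw [← h0, mul_zero]
    exact mul_nonneg (frobNorm_nonneg _) (l2norm_nonneg _)
  refine le_of_mul_le_mul_right ?_ hu0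
  calc singularValue M₀ r * l2norm u * l2norm u = singularValue M₀ r * (u ⬝ᵥ V₀ *ᵥ x) := by
        rw [← hsq]
        ring
    _ ≤ l2norm (M₀ *ᵥ u) * l2norm x := hV₀.singularValue_mul_dotProduct_mulVec_le hpos₀ u x
    _ ≤ frobNorm (M₀ - M) * l2norm u * l2norm x :=
        mul_le_mul_of_nonneg_right hgain (l2norm_nonneg x)
    _ = frobNorm (M₀ - M) * l2norm x * l2norm u := by ring

lemma one_sub_div_le_singularValue_transpose_mul (hV : IsRightSingularVectors M V)
    (hrank : M.rank ≤ r) (hpos : 0 < singularValue M r) (hV₀ : IsRightSingularVectors M₀ V₀)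
    (hpos₀ : 0 < singularValue M₀ r) (hr : 1 ≤ r) :
    1 - frobNorm (M₀ - M) / singularValue M₀ r ≤ singularValue (Vᵀ * V₀) r := by
  have hfinrank : Module.finrank ℝ (⊤ : Submodule ℝ (Fin r → ℝ)) = r := by simp
  have htop : (⊤ : Submodule ℝ (Fin r → ℝ)) ≠ ⊥ :=
    Submodule.one_le_finrank_iff.1 (hr.trans_eq hfinrank.symm)
  have hgain : 1 - frobNorm (M₀ - M) / singularValue M₀ r ≤ minGain (Vᵀ * V₀) ⊤ := by
    refine le_minGain _ htop fun x _ hx => ?_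
    have hu := hV.singularValue_mul_l2norm_sub_mulVec_transpose_mulVec_le hrank hpos hV₀ hpos₀ x
    rw [hx, mul_one, ← le_div_iff₀' hpos₀] at hu
    have htri := l2norm_le_l2norm_add_l2norm_sub (V₀ *ᵥ x) (V *ᵥ (Vᵀ *ᵥ (V₀ *ᵥ x)))
    rw [l2norm_mulVec_of_transpose_mul_self hV₀.1, l2norm_mulVec_of_transpose_mul_self hV.1, hx]
      at htri
    rw [← mulVec_mulVec]
    linarith
  simpa only [hfinrank] using hgain.trans (minGain_le_singularValue (Vᵀ * V₀) ⊤)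

end IsRightSingularVectors

lemma sSup_setOf_le_singularValue_eq {M M₀ : Matrix I J ℝ} {θ : ℝ} (hrank : M.rank ≤ r)
    (hθ : frobNorm (M₀ - M) < θ) (hsv : θ + frobNorm (M₀ - M) ≤ singularValue M r) :
    sSup {j : ℕ | θ ≤ singularValue M₀ j} = r := by
  have hweyl (j : ℕ) := abs_sub_le_iff.1 (abs_singularValue_sub_singularValue_le M₀ M j)
  refine IsGreatest.csSup_eq ⟨?_, fun j (hj : θ ≤ singularValue M₀ j) => ?_⟩
  · change θ ≤ singularValue M₀ r
    linarith [(hweyl r).2]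
  · by_contra! hrj
    have hnull := singularValue_eq_zero_of_rank_lt M (hrank.trans_lt hrj)
    linarith [(hweyl j).1]

lemma sSup_eq_and_half_lt_singularValue {M M₀ : Matrix I J ℝ} {V : Matrix J (Fin r) ℝ} (hr : 1 ≤ r)
    (hV : IsRightSingularVectors M V) (hrank : M.rank ≤ r) {θ ξ : ℝ} (hθ : 0 < θ) (hξ : 0 < ξ)
    (hξ1 : ξ ≤ 1) (hsv : (1 + ξ) * θ ≤ singularValue M r) (hclose : frobNorm (M₀ - M) ≤ ξ * θ / 2) :
    sSup {j : ℕ | θ ≤ singularValue M₀ j} = r ∧ ∀ V₀ : Matrix J (Fin r) ℝ,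
      IsRightSingularVectors M₀ V₀ → 1 / 2 < singularValue (Vᵀ * V₀) r := by
  have hξθ : 0 < ξ * θ := mul_pos hξ hθ
  have hξθ1 : ξ * θ ≤ θ := mul_le_of_le_one_left hθ.le hξ1
  have hweyl := (abs_sub_le_iff.1 (abs_singularValue_sub_singularValue_le M₀ M r)).2
  refine ⟨sSup_setOf_le_singularValue_eq hrank (by linarith) (by linarith), fun V₀ hV₀ => ?_⟩
  have hpos₀ : 0 < singularValue M₀ r := by linarith
  have hratio : frobNorm (M₀ - M) / singularValue M₀ r < 1 / 2 := by
    rw [div_lt_iff₀ hpos₀]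
    linarith
  have hsub := hV.one_sub_div_le_singularValue_transpose_mul hrank (by linarith) hV₀ hpos₀ hr
  linarith

end RightSingularVectors

section GaussianTail

lemma gaussianPDFReal_mul_exp_mul_sq {v q : ℝ≥0} (hv : v ≠ 0) (hq : q ≠ 0) (x : ℝ) :
    gaussianPDFReal 0 v x * Real.exp ((1 - 1 / (q : ℝ) ^ 2) / (2 * v) * x ^ 2) =
      q * gaussianPDFReal 0 (v * q ^ 2) x := by
  have hsqrt : √(2 * Real.pi * (v * (q : ℝ) ^ 2)) = √(2 * Real.pi * v) * q := by
    rw [← mul_assoc, Real.sqrt_mul' _ (by positivity), Real.sqrt_sq q.coe_nonneg]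
  have hexp : -x ^ 2 / (2 * (v : ℝ)) + (1 - 1 / (q : ℝ) ^ 2) / (2 * v) * x ^ 2 =
      -x ^ 2 / (2 * (v * (q : ℝ) ^ 2)) := by
    field_simp
    ring
  simp only [gaussianPDFReal_def, sub_zero, NNReal.coe_mul, NNReal.coe_pow]
  rw [mul_assoc, ← Real.exp_add, hexp, hsqrt]
  field_simp

lemma integrable_exp_mul_sq_gaussianReal {v q : ℝ≥0} (hv : v ≠ 0) (hq : q ≠ 0) :
    Integrable (fun x : ℝ => Real.exp ((1 - 1 / (q : ℝ) ^ 2) / (2 * v) * x ^ 2))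
      (gaussianReal 0 v) := by
  rw [gaussianReal_of_var_ne_zero _ hv, integrable_withDensity_iff_integrable_smul'
    (measurable_gaussianPDF 0 v) (ae_of_all _ fun x => gaussianPDF_lt_top)]
  simp only [toReal_gaussianPDF, smul_eq_mul, gaussianPDFReal_mul_exp_mul_sq hv hq]
  exact (integrable_gaussianPDFReal _ _).const_mul _

lemma integral_exp_mul_sq_gaussianReal {v q : ℝ≥0} (hv : v ≠ 0) (hq : q ≠ 0) :
    ∫ x : ℝ, Real.exp ((1 - 1 / (q : ℝ) ^ 2) / (2 * v) * x ^ 2) ∂(gaussianReal 0 v) = q := by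
  simp only [integral_gaussianReal_eq_integral_smul hv, smul_eq_mul,
    gaussianPDFReal_mul_exp_mul_sq hv hq]
  rw [integral_const_mul, integral_gaussianPDFReal_eq_one _ (mul_ne_zero hv (pow_ne_zero _ hq)),
    mul_one]

variable {ι : Type*} [Fintype ι]

lemma integrable_exp_mul_sum_sq_pi_gaussianReal {v q : ℝ≥0} (hv : v ≠ 0) (hq : q ≠ 0) :
    Integrable (fun y : ι → ℝ => Real.exp ((1 - 1 / (q : ℝ) ^ 2) / (2 * v) * ∑ k, y k ^ 2))
      (Measure.pi fun _ => gaussianReal 0 v) := by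
  simp only [Finset.mul_sum, Real.exp_sum]
  exact Integrable.fintype_prod fun _ => integrable_exp_mul_sq_gaussianReal hv hq

lemma mgf_sum_sq_pi_gaussianReal {v q : ℝ≥0} (hv : v ≠ 0) (hq : q ≠ 0) :
    mgf (fun y : ι → ℝ => ∑ k, y k ^ 2) (Measure.pi fun _ => gaussianReal 0 v)
      ((1 - 1 / (q : ℝ) ^ 2) / (2 * v)) = (q : ℝ) ^ Fintype.card ι := by
  simp only [mgf, Finset.mul_sum, Real.exp_sum]
  rw [integral_fintype_prod_eq_prod
    (f := fun _ x => Real.exp ((1 - 1 / (q : ℝ) ^ 2) / (2 * v) * x ^ 2))]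
  simp only [integral_exp_mul_sq_gaussianReal hv hq, Finset.prod_const, Finset.card_univ]

-- The Chernoff parameter is chosen so that the moment generating function is `q ^ card ι` with
-- `q = 1 + t / √(card ι)`, and `q ≤ exp (t / √(card ι))`.
lemma measureReal_pi_gaussianReal_sum_sq_ge_le [Nonempty ι] {v : ℝ≥0} (hv : v ≠ 0) {t : ℝ}
    (ht : 0 ≤ t) :
    (Measure.pi fun _ : ι => gaussianReal 0 v).real
      {y | v * (√(Fintype.card ι) + t) ^ 2 ≤ ∑ k, y k ^ 2} ≤ Real.exp (-(t ^ 2 / 2)) := by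
  have hN0 : 0 < √(Fintype.card ι : ℝ) := Real.sqrt_pos.2 (Nat.cast_pos.2 Fintype.card_pos)
  have hNsq : √(Fintype.card ι : ℝ) ^ 2 = Fintype.card ι := Real.sq_sqrt (Nat.cast_nonneg _)
  obtain ⟨q, hq1, htq⟩ : ∃ q : ℝ≥0, 1 ≤ q ∧ t = √(Fintype.card ι) * (q - 1) :=
    ⟨1 + (t / √(Fintype.card ι)).toNNReal, le_self_add, by
      rw [NNReal.coe_add, NNReal.coe_one, Real.coe_toNNReal _ (by positivity),
        add_sub_cancel_left, mul_div_cancel₀ _ hN0.ne']⟩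
  have hq0 : q ≠ 0 := (zero_lt_one.trans_le hq1).ne'
  set u : ℝ := (1 - 1 / (q : ℝ) ^ 2) / (2 * v) with hu_def
  have hu : 0 ≤ u :=
    div_nonneg (sub_nonneg.2 (div_le_one_of_le₀ (one_le_pow₀ hq1) (sq_nonneg _))) (by positivity)
  have hqexp : (q : ℝ) ^ Fintype.card ι ≤ Real.exp (Fintype.card ι * (q - 1)) := by
    rw [Real.exp_nat_mul]
    gcongr
    simpa using Real.add_one_le_exp ((q : ℝ) - 1)
  have hrate : u * (v * (√(Fintype.card ι) + t) ^ 2) = Fintype.card ι * (q ^ 2 - 1) / 2 := by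
    rw [htq, show √(Fintype.card ι : ℝ) + √(Fintype.card ι) * (q - 1) = √(Fintype.card ι) * q by
      ring, mul_pow, hNsq, hu_def]
    field_simp
  calc _ ≤ Real.exp (-u * (v * (√(Fintype.card ι) + t) ^ 2)) *
        mgf (fun y : ι → ℝ => ∑ k, y k ^ 2) (Measure.pi fun _ => gaussianReal 0 v) u :=
        measure_ge_le_exp_mul_mgf _ hu (integrable_exp_mul_sum_sq_pi_gaussianReal hv hq0)
    _ ≤ Real.exp (-(Fintype.card ι * (q ^ 2 - 1) / 2)) * Real.exp (Fintype.card ι * (q - 1)) := by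
        rw [mgf_sum_sq_pi_gaussianReal hv hq0, neg_mul, hrate]
        gcongr
    _ = Real.exp (-(t ^ 2 / 2)) := by
        rw [← Real.exp_add, htq, mul_pow, hNsq]
        ring_nf

lemma pi_gaussianReal_l2norm_gt_le {v : ℝ≥0} (hv : v ≠ 0) {t : ℝ} (ht : 0 ≤ t) :
    (Measure.pi fun _ : ι => gaussianReal 0 v)
      {y | √v * (√(Fintype.card ι) + t) < l2norm y} ≤ ENNReal.ofReal (Real.exp (-(t ^ 2 / 2))) := by
  rcases isEmpty_or_nonempty ι with hι | hι
  · have hempty : {y : ι → ℝ | √v * (√(Fintype.card ι) + t) < l2norm y} = ∅ := by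
      refine eq_empty_of_forall_notMem fun y hy => hy.out.not_ge ?_
      rw [Subsingleton.elim y 0, l2norm_zero]
      positivity
    simp only [hempty, measure_empty, zero_le]
  · refine (measure_mono fun y hy => ?_).trans
      (ENNReal.le_ofReal_iff_toReal_le (measure_ne_top _ _) (Real.exp_pos _).le |>.2
        (measureReal_pi_gaussianReal_sum_sq_ge_le hv ht))
    have hsq := pow_le_pow_left₀ (by positivity) hy.out.le 2
    rwa [mul_pow, Real.sq_sqrt v.coe_nonneg, l2norm_sq] at hsq

lemma charFunDual_gaussianReal_zero (v : ℝ≥0) (F : StrongDual ℝ ℝ) :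
    charFunDual (gaussianReal 0 v) F = Complex.exp ((-(v * F 1 ^ 2 / 2) : ℝ)) := by
  have hF : (F : ℝ → ℝ) = fun x => F 1 * x := by
    funext x
    rw [mul_comm, ← smul_eq_mul, ← map_smul, smul_eq_mul, mul_one]
  rw [charFunDual_eq_charFun_map_one, hF, gaussianReal_map_const_mul, charFun_gaussianReal]
  congr 1
  push_cast
  simp
  ring

lemma charFunDual_pi_gaussianReal_zero [DecidableEq ι] (v : ℝ≥0) (F : StrongDual ℝ (ι → ℝ)) :
    charFunDual (Measure.pi fun _ : ι => gaussianReal 0 v) F =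
      Complex.exp ((-(v * ∑ k, F (Pi.single k 1) ^ 2 / 2) : ℝ)) := by
  simp only [charFunDual_pi, charFunDual_gaussianReal_zero, ← Complex.exp_sum,
    ContinuousLinearMap.comp_apply, ContinuousLinearMap.single_apply]
  push_cast
  simp only [Finset.sum_neg_distrib, Finset.mul_sum, mul_div_assoc]

lemma map_sum_smul_pi_gaussianReal {κ : Type*} [Fintype κ] (x : κ → ℝ) (v : ℝ≥0) :
    Measure.map (fun z : κ → ι → ℝ => ∑ i, x i • z i)
        (Measure.pi fun _ => Measure.pi fun _ => gaussianReal 0 v) =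
      Measure.pi fun _ => gaussianReal 0 (v * (l2norm x ^ 2).toNNReal) := by
  classical
  let L : (κ → ι → ℝ) →L[ℝ] ι → ℝ := ∑ i, x i • ContinuousLinearMap.proj i
  have hL : ⇑L = fun z => ∑ i, x i • z i := by
    ext z
    simp [L]
  have hLsingle (F : StrongDual ℝ (ι → ℝ)) (i : κ) (y : ι → ℝ) :
      F (L (Pi.single i y)) = x i * F y := by
    rw [hL, ← smul_eq_mul, ← map_smul]
    congr 1
    exact (Finset.sum_eq_single i (fun b _ hb => by simp [hb]) (by simp)).trans (by simp)
  rw [← hL]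
  refine Measure.ext_of_charFunDual (funext fun F => ?_)
  simp only [charFunDual_map, charFunDual_pi (L := F ∘L L), charFunDual_pi_gaussianReal_zero,
    ContinuousLinearMap.comp_apply, ContinuousLinearMap.single_apply, hLsingle, mul_pow,
    ← Complex.exp_sum, ← Complex.ofReal_sum]
  congr 2
  rw [NNReal.coe_mul, Real.coe_toNNReal _ (sq_nonneg _), l2norm_sq]
  simp only [Finset.sum_neg_distrib, Finset.mul_sum, Finset.sum_mul, mul_div_assoc]
  rw [Finset.sum_comm]
  exact congrArg _ (Finset.sum_congr rfl fun _ _ => Finset.sum_congr rfl fun _ _ => by ring)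

end GaussianTail

section NoiseEvent

variable {n m p : ℕ}

instance isProbabilityMeasure_gaussianMatrix (v : ℝ≥0) :
    IsProbabilityMeasure (gaussianMatrix n m v) :=
  inferInstanceAs (IsProbabilityMeasure (Measure.pi fun _ => Measure.pi fun _ => gaussianReal 0 v))

lemma gaussianMatrix_l2norm_vecMul_gt_le {v : ℝ≥0} (hv : v ≠ 0) (x : Fin n → ℝ) {t : ℝ}
    (ht : 0 ≤ t) :
    gaussianMatrix n m v {z | √v * l2norm x * (√m + t) < l2norm (x ᵥ* z)} ≤
      ENNReal.ofReal (Real.exp (-(t ^ 2 / 2))) := by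
  rcases eq_or_ne x 0 with rfl | hx
  · simp [l2norm_zero]
  have hx0 : 0 < l2norm x := (l2norm_nonneg x).lt_of_ne' (mt l2norm_eq_zero.1 hx)
  set w : ℝ≥0 := v * (l2norm x ^ 2).toNNReal with hw
  have hw0 : w ≠ 0 := mul_ne_zero hv (Real.toNNReal_pos.2 (by positivity)).ne'
  have hsqrt : √(w : ℝ) = √v * l2norm x := by
    rw [hw, NNReal.coe_mul, Real.coe_toNNReal _ (sq_nonneg _), Real.sqrt_mul v.coe_nonneg,
      Real.sqrt_sq hx0.le]
  have htail := pi_gaussianReal_l2norm_gt_le (ι := Fin m) hw0 ht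
  rw [hw, ← map_sum_smul_pi_gaussianReal, ← hw, hsqrt, Fintype.card_fin] at htail
  simp only [vecMul_eq_sum]
  have hmeas : Continuous fun z : Fin n → Fin m → ℝ => ∑ i, x i • z i := by fun_prop
  exact (Measure.le_map_apply hmeas.aemeasurable _).trans htail

lemma ofReal_one_sub_inv_le_gaussianMatrix (hp : 1 ≤ p) {v : ℝ≥0} (hv : v ≠ 0)
    (X : Matrix (Fin n) (Fin p) ℝ) {xmax : ℝ} (hX : ∀ j, l2norm (Xᵀ j) ≤ xmax) :
    ENNReal.ofReal (1 - 1 / (p : ℝ)) ≤ gaussianMatrix n m v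
      {z | ∀ j, l2norm ((Xᵀ * z) j) ≤ √v * xmax * (√m + √(4 * Real.log p))} := by
  have hp0 : (0 : ℝ) < p := Nat.cast_pos.2 hp
  set t : ℝ := √(4 * Real.log p)
  set G : Set (Matrix (Fin n) (Fin m) ℝ) :=
    {z | ∀ j, l2norm ((Xᵀ * z) j) ≤ √v * xmax * (√m + t)}
  have hexp : Real.exp (-(t ^ 2 / 2)) = 1 / (p : ℝ) ^ 2 := by
    rw [Real.sq_sqrt (mul_nonneg zero_le_four (Real.log_nonneg (Nat.one_le_cast.2 hp))),
      show 4 * Real.log p / 2 = (2 : ℕ) * Real.log p by push_cast; ring, Real.exp_neg,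
      Real.exp_nat_mul, Real.exp_log hp0, one_div]
  have hsub : Gᶜ ⊆ ⋃ j, {z | √v * l2norm (Xᵀ j) * (√m + t) < l2norm (Xᵀ j ᵥ* z)} := by
    intro z hz
    obtain ⟨j, hj⟩ := not_forall.1 hz
    refine mem_iUnion.2 ⟨j, lt_of_le_of_lt ?_ (not_le.1 hj)⟩
    gcongr
    exact hX j
  have hbad : gaussianMatrix n m v Gᶜ ≤ ENNReal.ofReal (1 / (p : ℝ)) :=
    calc gaussianMatrix n m v Gᶜ ≤ ∑ _j : Fin p, ENNReal.ofReal (1 / (p : ℝ) ^ 2) := by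
          refine (measure_mono hsub).trans <| (measure_iUnion_fintype_le _ _).trans <|
            Finset.sum_le_sum fun j _ => ?_
          rw [← hexp]
          exact gaussianMatrix_l2norm_vecMul_gt_le hv (Xᵀ j) (Real.sqrt_nonneg _)
      _ = ENNReal.ofReal (1 / (p : ℝ)) := by
          rw [Finset.sum_const, Finset.card_univ, Fintype.card_fin, nsmul_eq_mul,
            ← ENNReal.ofReal_natCast, ← ENNReal.ofReal_mul hp0.le]
          congr 1
          field_simp
  have htot : 1 ≤ gaussianMatrix n m v G + gaussianMatrix n m v Gᶜ := by
    rw [← measure_univ (μ := gaussianMatrix n m v), ← union_compl_self G]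
    exact measure_union_le _ _
  rw [ENNReal.ofReal_sub _ (by positivity), ENNReal.ofReal_one, tsub_le_iff_right]
  exact htot.trans (by gcongr)

end NoiseEvent

section Initialization

lemma sqrt_mul_sqrt_add_sqrt_le (a : ℝ) {b c : ℝ} (hb : 0 ≤ b) (hc : 0 ≤ c) :
    √a * (√b + √c) ≤ 2 * √(a * (b + c)) := by
  have hb' : √b ≤ √(b + c) := Real.sqrt_le_sqrt (le_add_of_nonneg_right hc)
  have hc' : √c ≤ √(b + c) := Real.sqrt_le_sqrt (le_add_of_nonneg_left hb)
  calc √a * (√b + √c) ≤ √a * (√(b + c) + √(b + c)) := by gcongr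
    _ = 2 * √(a * (b + c)) := by rw [Real.sqrt_mul' _ (add_nonneg hb hc)]; ring

lemma lt_of_sqrt_div_sub_one_pos {s k : ℕ} (hs : 1 ≤ s) (h : 0 < √((k : ℝ) / s - 1)) : s < k := by
  have hratio : 1 < (k : ℝ) / s := sub_pos.1 (Real.sqrt_pos.1 h)
  exact_mod_cast (one_lt_div (by positivity)).1 hratio

lemma frobNorm_mul_sub_mul_le_of_lam_le {n m p s k : ℕ} {X : Matrix (Fin n) (Fin p) ℝ}
    {A A₀ : Matrix (Fin p) (Fin m) ℝ} {Z : Matrix (Fin n) (Fin m) ℝ} {lam σ b L c : ℝ}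
    (hσ : 0 ≤ σ) (hb : 0 ≤ b) (hL : 0 ≤ L) (hlam0 : 0 ≤ lam)
    (hlam : lam ≤ 4 * σ * kappaPlus X k * (√b + √L))
    (hmin : frobNorm (X * A + Z - X * A₀) ^ 2 / 2 + lam * norm21 A₀ ≤
      frobNorm (X * A + Z - X * A) ^ 2 / 2 + lam * norm21 A)
    (hZ : ∀ j, l2norm ((Xᵀ * Z) j) ≤ lam / 2) (hA : (rowSupport A).card ≤ s)
    (hs : 1 ≤ s) (hκ : 0 < kappaMinusSq X k) (hc : 0 < c) (hck : 6 * c ≤ √((k : ℝ) / s - 1))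
    (hgap : (kappaPlusSq X k - kappaMinusSq X (2 * k)) / kappaMinusSq X k ≤ c) :
    frobNorm (X * A₀ - X * A) ≤
      48 * kappaPlusSq X k / kappaMinusSq X k * (σ * √(s * (b + L))) := by
  have herror := groupLasso_prediction_error_le hlam0 hmin hZ hA (le_of_kappaMinusSq_pos X hκ) hs
    (lt_of_sqrt_div_sub_one_pos hs (by linarith)) hc.le hck ((div_le_iff₀ hκ).1 hgap)
  have hplus : 0 ≤ kappaPlus X k := Real.sqrt_nonneg _
  rw [← Matrix.mul_sub, div_mul_eq_mul_div, le_div_iff₀' hκ]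
  calc kappaMinusSq X k * frobNorm (X * (A₀ - A))
      ≤ 6 * (4 * σ * kappaPlus X k * (√b + √L)) * √s * kappaPlus X k := herror.trans (by gcongr)
    _ = 24 * σ * kappaPlus X k ^ 2 * (√s * (√b + √L)) := by ring
    _ ≤ 24 * σ * kappaPlus X k ^ 2 * (2 * √(s * (b + L))) :=
        mul_le_mul_of_nonneg_left (sqrt_mul_sqrt_add_sqrt_le _ hb hL) (by positivity)
    _ = 48 * kappaPlusSq X k * (σ * √(s * (b + L))) := by rw [kappaPlus_sq]; ring

theorem stmt11_general {n m p s r sstar : ℕ} {C0 cstar σ η ξ xmax lam0 : ℝ}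
    {X : Matrix (Fin n) (Fin p) ℝ} {A : Matrix (Fin p) (Fin m) ℝ} {V : Matrix (Fin m) (Fin r) ℝ}
    {A0 : Matrix (Fin n) (Fin m) ℝ → Matrix (Fin p) (Fin m) ℝ}
    (hr : 1 ≤ r) (hs : 1 ≤ s) (hrank : A.rank ≤ r) (hsupp : (rowSupport A).card ≤ s)
    (hσ : 0 < σ) (hξ : ξ ∈ Set.Ioc (0 : ℝ) 1)
    (hxle : ∀ j, l2norm (Xᵀ j) ≤ xmax) (hxmax : ∃ j, l2norm (Xᵀ j) = xmax)
    (hlam : lam0 = 4 * σ * xmax * (√m + √(4 * Real.log p)))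
    (hκ : 0 < kappaMinusSq X sstar) (hcstar : 0 < cstar)
    (hsstar : 6 * cstar ≤ √((sstar : ℝ) / s - 1))
    (hSE : (kappaPlusSq X sstar - kappaMinusSq X (2 * sstar)) / kappaMinusSq X sstar ≤ cstar)
    (hC0 : 48 * kappaPlusSq X sstar / kappaMinusSq X sstar < C0)
    (hV : IsRightSingularVectors (X * A) V)
    (hη : 2 * C0 * √(s * (m + 4 * Real.log p)) / ξ ≤ η)
    (hsv : (1 + ξ) * σ * η ≤ singularValue (X * A) r)
    (hmin : ∀ z, frobNorm (X * A + z - X * A0 z) ^ 2 / 2 + lam0 * norm21 (A0 z) ≤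
      frobNorm (X * A + z - X * A) ^ 2 / 2 + lam0 * norm21 A) :
    ENNReal.ofReal (1 - 1 / (p : ℝ)) ≤
      gaussianMatrix n m (Real.toNNReal ((2 * σ) ^ 2))
        {z | sSup {j : ℕ | σ * η ≤ singularValue (X * A0 z) j} = r ∧
          ∀ V0 : Matrix (Fin m) (Fin r) ℝ,
            IsRightSingularVectors (X * A0 z) V0 → 1 / 2 < singularValue (Vᵀ * V0) r} := by
  obtain ⟨j, hj⟩ := hxmax
  have hp : 1 ≤ p := j.pos
  have hxmax0 : 0 ≤ xmax := (l2norm_nonneg _).trans (hxle j)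
  have hlog : 0 ≤ 4 * Real.log p := by have := Real.log_natCast_nonneg p; positivity
  have hstd : √(((2 * σ) ^ 2).toNNReal : ℝ) = 2 * σ := by
    rw [Real.coe_toNNReal _ (sq_nonneg _), Real.sqrt_sq (by positivity)]
  have hm : 1 ≤ m := by
    have hrm := rank_le_height V
    rw [rank_eq_card_of_transpose_mul_self hV.1, Fintype.card_fin] at hrm
    exact hr.trans hrm
  have hC0_pos : 0 < C0 :=
    (div_nonneg (mul_nonneg (by norm_num) (kappaPlusSq_nonneg X sstar)) hκ.le).trans_lt hC0
  have hη0 : 0 < η := lt_of_lt_of_le (div_pos (by positivity) hξ.1) hη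
  refine (ofReal_one_sub_inv_le_gaussianMatrix hp
    (Real.toNNReal_pos.2 (by positivity)).ne' X hxle).trans (measure_mono fun z hz => ?_)
  have hnoise (i : Fin p) : l2norm ((Xᵀ * z) i) ≤ lam0 / 2 := (hz.out i).trans_eq (by
    rw [hstd, hlam]
    ring)
  have hcol : xmax ≤ kappaPlus X sstar := hj ▸ l2norm_col_le_kappaPlus X
    (le_of_kappaMinusSq_pos X hκ)
    (hs.trans (lt_of_sqrt_div_sub_one_pos hs (by linarith)).le) j
  have herror := frobNorm_mul_sub_mul_le_of_lam_le hσ.le m.cast_nonneg hlog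
    (by rw [hlam]; positivity) (by rw [hlam]; gcongr) (hmin z) hnoise hsupp hs hκ hcstar hsstar hSE
  refine sSup_eq_and_half_lt_singularValue hr hV ((rank_mul_le_right X A).trans hrank)
    (mul_pos hσ hη0) hξ.1 hξ.2 (by rwa [← mul_assoc]) (herror.trans ?_)
  calc _ ≤ C0 * (σ * √(s * (m + 4 * Real.log p))) := by gcongr
    _ = σ * (2 * C0 * √(s * (m + 4 * Real.log p))) / 2 := by ring
    _ ≤ σ * (ξ * η) / 2 :=
        div_le_div_of_nonneg_right
          (mul_le_mul_of_nonneg_left ((div_le_iff₀' hξ.1).1 hη) hσ.le) zero_le_two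
    _ = ξ * (σ * η) / 2 := by ring

end Initialization

/-- Initialization II. For all values a = κ₋(s_*), b = κ₊(s_*) and c_* there exist
a sufficiently large constant C₀, a sufficiently small constant c₁ > 0 and a constant c₀ > 0
(depending only on them) such that: for Y₀ = XA + Z₀ with Z₀ i.i.d. N(0,(2σ)²) entries and
A ∈ Θ(s,r,d,γ), letting A₀ be any pointwise group Lasso minimizer at level
λ₀ = 4σ max_j ‖X_{*j}‖(√m + √(4 log p)), under SE(s_*, c_*, K), η ≥ 2C₀√(s(m+4 log p))/ξ,
σ√(s(m+4 log p)) < c₁d, and σ_r(XA) ≥ (1+ξ)ση: with probability at least 1 − 1/p,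
r̂ = max{j : σ_j(XA₀) ≥ ση} equals r and every matrix V₀ of top-r right singular vectors of
XA₀ satisfies σ_r(V'V₀) > c₀. -/
theorem stmt11 :
    ∀ a b cstar : ℝ, 0 < a → 0 < cstar →
    ∃ C0 c1 c0 : ℝ, 0 < C0 ∧ 0 < c1 ∧ 0 < c0 ∧
    ∀ (n m p s r sstar : ℕ) (d γ σ η ξ xmax lam0 K : ℝ)
      (X : Matrix (Fin n) (Fin p) ℝ) (A : Matrix (Fin p) (Fin m) ℝ)
      (V : Matrix (Fin m) (Fin r) ℝ)
      (A0 : Matrix (Fin n) (Fin m) ℝ → Matrix (Fin p) (Fin m) ℝ),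
      1 ≤ r → 1 ≤ γ → 1 ≤ s →
      memTheta A s r d γ →
      0 < σ → ξ ∈ Set.Ioc (0 : ℝ) 1 →
      -- λ₀ = 4σ max_j ‖X_{*j}‖ (√m + √(4 log p))
      (∀ j : Fin p, l2norm (Xᵀ j) ≤ xmax) → (∃ j : Fin p, l2norm (Xᵀ j) = xmax) →
      lam0 = 4 * σ * xmax * (Real.sqrt m + Real.sqrt (4 * Real.log p)) →
      -- sparse eigenvalue condition SE(s_*, c_*, K)
      1 < K → K⁻¹ ≤ kappaMinus X sstar → kappaMinus X sstar ≤ kappaPlus X sstar →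
      kappaPlus X sstar ≤ K →
      kappaMinus X sstar = a → kappaPlus X sstar = b →
      2 * s ≤ sstar →
      6 * cstar ≤ Real.sqrt ((sstar : ℝ) / (s : ℝ) - 1) →
      (kappaPlusSq X sstar - kappaMinusSq X (2 * sstar)) / kappaMinusSq X sstar < cstar →
      IsRightSingularVectors (X * A) V →
      2 * C0 * Real.sqrt ((s : ℝ) * ((m : ℝ) + 4 * Real.log p)) / ξ ≤ η →
      σ * Real.sqrt ((s : ℝ) * ((m : ℝ) + 4 * Real.log p)) < c1 * d →
      (1 + ξ) * σ * η ≤ singularValue (X * A) r →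
      -- A₀ is a pointwise minimizer of the group Lasso objective for Y₀ = XA + z
      (∀ z : Matrix (Fin n) (Fin m) ℝ, ∀ A' : Matrix (Fin p) (Fin m) ℝ,
        frobNorm (X * A + z - X * A0 z) ^ 2 / 2 + lam0 * norm21 (A0 z) ≤
          frobNorm (X * A + z - X * A') ^ 2 / 2 + lam0 * norm21 A') →
      ENNReal.ofReal (1 - 1 / (p : ℝ)) ≤
        gaussianMatrix n m (Real.toNNReal ((2 * σ) ^ 2))
          {z | sSup {j : ℕ | σ * η ≤ singularValue (X * A0 z) j} = r ∧
            ∀ V0 : Matrix (Fin m) (Fin r) ℝ,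
              IsRightSingularVectors (X * A0 z) V0 → c0 < singularValue (Vᵀ * V0) r} := by
  intro a b cstar ha hcstar
  refine ⟨48 * b ^ 2 / a ^ 2 + 1, 1, 1 / 2, by positivity, one_pos, by norm_num, ?_⟩
  rintro n m p s r sstar d γ σ η ξ xmax lam0 K X A V A0 hr - hs ⟨hrank, -, -, -, hsupp⟩ hσ hξ hxle
    hxmax hlam - - - - rfl rfl - hsstar hSE hV hη - hsv hmin
  exact stmt11_general hr hs hrank.le hsupp hσ hξ hxle hxmax hlam (Real.sqrt_pos.1 ha) hcstar
    hsstar hSE.le (by rw [kappaPlus_sq, kappaMinus_sq]; exact lt_add_one _) hV hη hsv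
    fun z => hmin z A

end
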